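/- Uniform H¹ bound for solutions of the regularized Chern–Simons–Schrödinger equation: let β ∈ ℝ, R > 0, and let u : ℝ × ℝ² → ℂ be a smooth Schwartz-class solution of the Chern–Simons–Schrödinger equation i ∂ₜ u = −Δu − 2iβ A·∇u + β²‖A‖²u − β(K_R ∗ (2βA|u|² + J[u]))u with A(t,·) = K_R ∗ |u(t,·)|², which additionally conserves mass, i.e. ‖u(t,·)‖₂ = ‖u(0,·)‖₂ for all t. Then there exists a constant C depending only on β and ‖u(0,·)‖_{H¹} (in particular independent of R and of t) such that ‖u(t,·)‖_{H¹} ≤ C for all t. -/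

import Mathlib

noncomputable section
open MeasureTheory ENNReal
open scoped RealInnerProductSpace

/-- The plane `ℝ²`. -/
abbrev E2 : Type := EuclideanSpace ℝ (Fin 2)

/-- The rotation by 90 degrees: `x^⊥ = (-x₂, x₁)`. -/
def perp (x : E2) : E2 := (WithLp.equiv 2 (Fin 2 → ℝ)).symm ![-(x 1), x 0]

/-- The Aharonov–Bohm kernel `K_R(x) = x^⊥ / (max R ‖x‖)²` (with `K_R 0 = 0`,
also when `R = 0`, by the junk-value convention `(0 : ℝ)⁻¹ = 0`). -/
def K (R : ℝ) (x : E2) : E2 := ((max R ‖x‖) ^ 2)⁻¹ • perp x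

/-- The standard basis of `ℝ²`. -/
def e2 (j : Fin 2) : E2 := EuclideanSpace.single j 1

/-- Componentwise convolution of the vector kernel `K_R` with a scalar density. -/
def convKs (R : ℝ) (ρ : E2 → ℝ) (x : E2) : E2 := ∫ y, ρ y • K R (x - y)

/-- Convolution of the vector kernel `K_R` with a vector field, summed over components. -/
def convKv (R : ℝ) (F : E2 → E2) (x : E2) : ℝ := ∫ y, ⟪K R (x - y), F y⟫

/-- The current `J[u] = i(u∇ū - ū∇u) = 2 Im(ū ∇u)`, an `ℝ²`-valued function. -/
def Jf (u : E2 → ℂ) (x : E2) : E2 :=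
  (WithLp.equiv 2 (Fin 2 → ℝ)).symm fun j =>
    2 * ((starRingEnd ℂ) (u x) * fderiv ℝ u x (e2 j)).im

/-- The `H¹` norm `(‖u‖₂² + ‖∇u‖₂²)^{1/2}` (extended-real valued). -/
def H1 (u : E2 → ℂ) : ℝ≥0∞ :=
  (eLpNorm u 2 volume ^ 2 + eLpNorm (fun x => fderiv ℝ u x) 2 volume ^ 2) ^ (1 / 2 : ℝ)

/-- The `H²` norm `(‖u‖₂² + ‖∇u‖₂² + ‖∇²u‖₂²)^{1/2}` (extended-real valued). -/
def H2 (u : E2 → ℂ) : ℝ≥0∞ :=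
  (eLpNorm u 2 volume ^ 2 + eLpNorm (fun x => fderiv ℝ u x) 2 volume ^ 2
    + eLpNorm (fun x => fderiv ℝ (fderiv ℝ u) x) 2 volume ^ 2) ^ (1 / 2 : ℝ)

/-- The magnetic potential `A^R[|u|²] = K_R ∗ |u|²`. -/
def Apot (R : ℝ) (u : E2 → ℂ) (x : E2) : E2 := convKs R (fun y => ‖u y‖ ^ 2) x

/-- Laplacian of a complex function on `ℝ²`. -/
def lap (u : E2 → ℂ) (x : E2) : ℂ :=
  ∑ j : Fin 2, fderiv ℝ (fun y => fderiv ℝ u y (e2 j)) x (e2 j)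

/-- Right-hand side of the regularized Chern–Simons–Schrödinger equation
`i∂ₜu = -Δu - 2iβ A·∇u + β²‖A‖²u - β(K_R ∗ (2βA|u|² + J[u]))u`,
where `A = A^R[|u|²]`. -/
def cssRHS (β R : ℝ) (u : E2 → ℂ) (x : E2) : ℂ :=
  -(lap u x) - 2 * β * Complex.I * fderiv ℝ u x (Apot R u x)
    + (↑(β ^ 2 * ‖Apot R u x‖ ^ 2) : ℂ) * u x
    - (β : ℂ) * (↑(convKv R (fun y => (2 * β * ‖u y‖ ^ 2) • Apot R u y + Jf u y) x) : ℂ) * u x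

/-- The (average-field / magnetic) energy `∫ ‖(-i∇ + β A^R[|u|²]) u‖²`. -/
def energy (β R : ℝ) (u : E2 → ℂ) : ℝ :=
  ∫ x, ∑ j : Fin 2,
    ‖-Complex.I * fderiv ℝ u x (e2 j) + (↑(β * Apot R u x j) : ℂ) * u x‖ ^ 2

/-!
Since `|K_R(x)| ≤ 1 / |x|`, Hardy's inequality `∫ |f(x)| / |x| ≤ ∫ |∇f|` for `f = |u|²` together
with the diamagnetic inequality `|∇|u|²| ≤ 2|u||(-i∇ + βA)u|` bounds `‖A‖_∞` by
`2‖u‖₂‖(-i∇ + βA)u‖₂`, for every `R`. For `‖u‖₂ ≤ m` the square root of the energy and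
`‖∇u‖₂` are therefore comparable up to the factor `1 + 2|β|m²`, and the theorem reduces to
conservation of mass and energy.

A family of Schwartz functions that is smooth in `(t, x)` need not be differentiable, or even
bounded, in `H¹` as a function of `t`, so the identities `dm/dt = 0` and `dE/dt = 0` are not
available directly. On a time interval where the `H¹` norm is bounded, mass is conserved by a
spatial cutoff, and an `L²` stability estimate makes `u` Lipschitz in time with values in `L²`,
which suffices for the energy: its increments are bounded below by
`2 Re⟪u(t) - u(s), ℋu(s)⟫ - C‖u(t) - u(s)‖₂²`. In general the `H¹` norm is lower
semicontinuous in time and controlled by the two conserved quantities, and Baire's theorem shows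
that it is locally bounded.
-/

section

open Set Filter Topology
open scoped SchwartzMap LineDeriv

local notation "‖" f "‖₂" => lpNorm f 2 volume

theorem bddAbove_image_of_isCompact_of_locally {X : Type*} [TopologicalSpace X] {g : X → ℝ}
    {s : Set X} (hs : IsCompact s) (h : ∀ x ∈ s, ∃ U ∈ 𝓝 x, BddAbove (g '' U)) :
    BddAbove (g '' s) := by
  refine hs.induction_on (p := fun t => BddAbove (g '' t)) (by simp)
    (fun _ _ hst ht => ht.mono (image_mono hst))
    (fun _ _ hs ht => by simpa only [image_union] using hs.union ht) fun x hx => ?_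
  obtain ⟨U, hU, hg⟩ := h x hx
  exact ⟨U, mem_nhdsWithin_of_mem_nhds hU, hg⟩

theorem exists_ball_inter_le_of_lowerSemicontinuous {X : Type*} [MetricSpace X] [CompleteSpace X]
    {g : X → ℝ} (hg : LowerSemicontinuous g) {F : Set X} (hF : IsClosed F) (hne : F.Nonempty) :
    ∃ x ∈ F, ∃ r > 0, ∃ n, ∀ y ∈ F ∩ Metric.ball x r, g y ≤ n := by
  have := hF.completeSpace_coe
  have := hne.to_subtype
  obtain ⟨n, x, hx⟩ := nonempty_interior_of_iUnion_of_closed (X := F)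
    (f := fun n : ℕ => {y | g y ≤ n})
    (fun n => (hg.isClosed_preimage (n : ℝ)).preimage continuous_subtype_val)
    (iUnion_eq_univ_iff.2 fun y => exists_nat_ge (g y))
  obtain ⟨r, hr, hball⟩ := Metric.isOpen_iff.1 isOpen_interior x hx
  refine ⟨x, x.2, r, hr, n, fun y hy => ?_⟩
  have hmem : (⟨y, hy.1⟩ : F) ∈ {z : F | g z ≤ n} := interior_subset (hball hy.2)
  exact hmem

section LocallyConstant

variable {α : Type*} {g : ℝ → ℝ} {E : ℝ → α}

theorem eq_of_bddAbove_nhds_off_endpoint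
    (hE : ∀ a b, BddAbove (g '' uIcc a b) → E a = E b)
    (hgE : ∀ n : ℝ, ∃ N, ∀ s t, E s = E t → g s ≤ n → g t ≤ N) {a t : ℝ}
    (h : ∀ s ∈ uIcc a t, s ≠ a → ∃ U ∈ 𝓝 s, BddAbove (g '' U)) : E a = E t := by
  have hEt : ∀ s ∈ uIcc a t, s ≠ a → E t = E s := fun s hs hsa => by
    refine hE t s (bddAbove_image_of_isCompact_of_locally isCompact_uIcc fun y hy =>
      h y (uIcc_subset_uIcc right_mem_uIcc hs hy) ?_)
    rintro rfl
    grind [mem_uIcc]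
  obtain ⟨N, hN⟩ := hgE (g t)
  refine hE a t ⟨max (g a) N, ?_⟩
  rintro _ ⟨s, hs, rfl⟩
  rcases eq_or_ne s a with rfl | hsa
  · exact le_max_left _ _
  · exact le_max_of_le_right (hN t s (hEt s hs hsa) le_rfl)

theorem bddAbove_image_ball_of_le_on_compl
    (hE : ∀ a b, BddAbove (g '' uIcc a b) → E a = E b)
    (hgE : ∀ n : ℝ, ∃ N, ∀ s t, E s = E t → g s ≤ n → g t ≤ N) {F : Set ℝ} (hF : IsClosed F)
    (hFc : ∀ s ∉ F, ∃ U ∈ 𝓝 s, BddAbove (g '' U)) {x r n : ℝ} (hx : x ∈ F)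
    (hn : ∀ y ∈ F ∩ Metric.ball x r, g y ≤ n) : BddAbove (g '' Metric.ball x r) := by
  obtain ⟨N, hN⟩ := hgE n
  refine ⟨N, ?_⟩
  rintro _ ⟨t, ht, rfl⟩
  have hcpt : IsCompact (F ∩ uIcc x t) := isCompact_uIcc.inter_left hF
  obtain ⟨a, ⟨haF, hat⟩, hmin⟩ := hcpt.exists_isMinOn ⟨x, hx, left_mem_uIcc⟩
    (f := fun a => |a - t|) (by fun_prop)
  have hsub : uIcc a t ⊆ uIcc x t := uIcc_subset_uIcc hat right_mem_uIcc
  have hEat : E a = E t := by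
    refine eq_of_bddAbove_nhds_off_endpoint hE hgE fun s hs hsa => hFc s fun hsF => ?_
    have hdist : |a - t| ≤ |s - t| := hmin ⟨hsF, hsub hs⟩
    grind [mem_uIcc]
  have hball : a ∈ Metric.ball x r := by
    rw [Metric.mem_ball, Real.dist_eq] at ht ⊢
    grind [mem_uIcc]
  exact hN a t hEat (hn a ⟨haF, hball⟩)

/- The times near which `g` is unbounded form a closed set `F`. If `F` were nonempty, Baire's
theorem would bound `g` on a relatively open piece of `F`, and conservation of `E` off `F` would
propagate this bound into the gaps of `F`, a contradiction. -/
theorem eq_of_forall_eq_of_bddAbove (hg : LowerSemicontinuous g)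
    (hE : ∀ a b, BddAbove (g '' uIcc a b) → E a = E b)
    (hgE : ∀ n : ℝ, ∃ N, ∀ s t, E s = E t → g s ≤ n → g t ≤ N) (a b : ℝ) : E a = E b := by
  suffices hloc : ∀ s, ∃ U ∈ 𝓝 s, BddAbove (g '' U) from
    hE a b (bddAbove_image_of_isCompact_of_locally isCompact_uIcc fun s _ => hloc s)
  set F : Set ℝ := {s | ∃ U ∈ 𝓝 s, BddAbove (g '' U)}ᶜ with hFdef
  have hF : IsClosed F := by
    refine isOpen_compl_iff.1 (isOpen_iff_mem_nhds.2 fun s hs => ?_)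
    obtain ⟨U, hU, hb⟩ : ∃ U ∈ 𝓝 s, BddAbove (g '' U) := by simpa [hFdef] using hs
    filter_upwards [eventually_mem_nhds_iff.2 hU] with y hy
    simpa [hFdef] using ⟨U, hy, hb⟩
  by_contra hne
  replace hne : F.Nonempty := by simpa [hFdef, Set.Nonempty] using hne
  obtain ⟨x, hx, r, hr, n, hn⟩ := exists_ball_inter_le_of_lowerSemicontinuous hg hF hne
  exact hx ⟨_, Metric.ball_mem_nhds x hr,
    bddAbove_image_ball_of_le_on_compl hE hgE hF (fun s hs => by simpa [hFdef] using hs) hx hn⟩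

theorem eq_of_forall_dist_le_imp_eq {δ a b : ℝ} (hδ : 0 < δ)
    (h : ∀ s ∈ uIcc a b, ∀ t ∈ uIcc a b, s ≤ t → t - s ≤ δ → E s = E t) : E a = E b := by
  have hnear : ∀ s ∈ uIcc a b, ∀ t ∈ uIcc a b, |t - s| ≤ δ → E s = E t := fun s hs t ht hst => by
    rcases le_total s t with hle | hle
    · exact h s hs t ht hle ((le_abs_self _).trans hst)
    · exact (h t ht s hs hle (by rw [abs_sub_comm] at hst; exact (le_abs_self _).trans hst)).symm
  refine isPreconnected_uIcc.induction₂ (fun s t => E s = E t) (fun s hs => ?_)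
    (fun _ _ _ _ _ _ => Eq.trans) (fun _ _ _ _ => Eq.symm) left_mem_uIcc right_mem_uIcc
  filter_upwards [nhdsWithin_le_nhds (Metric.closedBall_mem_nhds s hδ), self_mem_nhdsWithin]
    with t ht htm
  exact hnear s hs t htm (by rwa [Metric.mem_closedBall, Real.dist_eq] at ht)

end LocallyConstant

theorem le_of_forall_eventually_neg_mul_le {E : ℝ → ℝ} {a b : ℝ} (hab : a ≤ b)
    (hc : ContinuousOn E (Icc a b))
    (h : ∀ x ∈ Icc a b, ∀ ε > 0, ∀ᶠ t in 𝓝[Icc a b] x, -(ε * |t - x|) ≤ E t - E x) :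
    E a ≤ E b := by
  refine neg_le_neg_iff.1 (image_le_of_liminf_slope_right_le_deriv_boundary (f := fun x => -E x)
    hc.neg (B := fun _ => -E a) le_rfl continuousOn_const
    (fun x _ => hasDerivWithinAt_const ..) (fun x hx r hr => Eventually.frequently ?_)
    (right_mem_Icc.2 hab))
  have hle : 𝓝[>] x ≤ 𝓝[Icc a b] x := by
    rw [← nhdsWithin_Ioc_eq_nhdsGT hx.2]
    exact nhdsWithin_mono _ fun y hy => ⟨hx.1.trans hy.1.le, hy.2⟩
  filter_upwards [hle (h x ⟨hx.1, hx.2.le⟩ (r / 2) (half_pos hr)), self_mem_nhdsWithin]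
    with t ht htx
  have hpos : 0 < t - x := sub_pos.2 htx
  rw [slope_def_field, div_lt_iff₀ hpos]
  rw [abs_of_pos hpos] at ht
  linarith [mul_pos hr hpos]

theorem eq_of_forall_eventually_neg_mul_le {E : ℝ → ℝ} {a b : ℝ} (hab : a ≤ b)
    (hc : ContinuousOn E (Icc a b))
    (h : ∀ x ∈ Icc a b, ∀ ε > 0, ∀ᶠ t in 𝓝[Icc a b] x, -(ε * |t - x|) ≤ E t - E x) :
    E a = E b := by
  refine le_antisymm (le_of_forall_eventually_neg_mul_le hab hc h) ?_
  have hmaps : MapsTo (fun x : ℝ => -x) (Icc (-b) (-a)) (Icc a b) := fun x hx =>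
    ⟨by linarith [hx.2], by linarith [hx.1]⟩
  simpa only [neg_neg] using le_of_forall_eventually_neg_mul_le (E := fun x => E (-x))
    (neg_le_neg hab) (hc.comp continuous_neg.continuousOn hmaps) fun x hx ε hε => by
      have ht : Tendsto (fun x : ℝ => -x) (𝓝[Icc (-b) (-a)] x) (𝓝[Icc a b] (-x)) :=
        continuous_neg.continuousWithinAt.tendsto_nhdsWithin hmaps
      filter_upwards [ht.eventually (h (-x) (hmaps hx) ε hε)] with t ht
      rwa [show |-t - -x| = |t - x| by rw [neg_sub_neg, abs_sub_comm]] at ht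

theorem le_of_forall_sq_le_of_bddAbove {f : ℝ → ℝ} {a b c σ : ℝ} (hσ : 0 ≤ σ)
    (hf : ∀ s, 0 ≤ f s) (hbdd : BddAbove (f '' Icc a b)) (hc : c * (b - a) ≤ 1 / 4)
    (h : ∀ D, (∀ s ∈ Icc a b, f s ≤ D) →
      ∀ s ∈ Icc a b, f s ^ 2 ≤ f a ^ 2 + 2 * D * (σ + c * D) * (b - a))
    {s : ℝ} (hs : s ∈ Icc a b) : f s ≤ 2 * f a + 4 * σ * (b - a) := by
  set D := sSup (f '' Icc a b)
  have hD : ∀ r ∈ Icc a b, f r ≤ D := fun r hr => le_csSup hbdd (mem_image_of_mem f hr)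
  have hD0 : 0 ≤ D := (hf s).trans (hD s hs)
  have hab : 0 ≤ b - a := sub_nonneg.2 (hs.1.trans hs.2)
  have hsq : D ^ 2 ≤ f a ^ 2 + 2 * D * (σ + c * D) * (b - a) := by
    have hrhs : 0 ≤ f a ^ 2 + 2 * D * (σ + c * D) * (b - a) := (sq_nonneg _).trans (h D hD s hs)
    refine (Real.le_sqrt hD0 hrhs).1 (csSup_le (Nonempty.image f ⟨s, hs⟩) ?_)
    rintro _ ⟨r, hr, rfl⟩
    exact Real.le_sqrt_of_sq_le (h D hD r hr)
  refine (hD s hs).trans (le_of_not_gt fun hlt => ?_)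
  nlinarith [mul_le_mul_of_nonneg_right hc (sq_nonneg D), hf a, mul_nonneg hσ hab,
    mul_nonneg (hf a) (mul_nonneg hσ hab)]

section FunctionClasses

variable {X F G : Type*} [TopologicalSpace X] [NormedAddCommGroup F] [NormedAddCommGroup G]

/-- Bounded continuous functions, as a predicate on unbundled functions. -/
@[fun_prop]
structure IsBddCont (f : X → F) : Prop where
  continuous : Continuous f
  exists_norm_le : ∃ C, ∀ x, ‖f x‖ ≤ C

/-- Bounded continuous integrable functions. They form an algebra and a module over the bounded
continuous functions, so that integrability of products is automatic. -/
@[fun_prop]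
structure IsTame [MeasureSpace X] (f : X → F) : Prop where
  isBddCont : IsBddCont f
  integrable : Integrable f

namespace IsBddCont

theorem of_norm_le {f : X → F} {g : X → G} {C : ℝ} (hg : IsBddCont g) (hf : Continuous f)
    (h : ∀ x, ‖f x‖ ≤ C * ‖g x‖) : IsBddCont f := by
  obtain ⟨D, hD⟩ := hg.exists_norm_le
  refine ⟨hf, |C| * D, fun x => (h x).trans ?_⟩
  exact mul_le_mul (le_abs_self C) (hD x) (norm_nonneg _) (abs_nonneg _)

@[fun_prop]
theorem const (c : F) : IsBddCont fun _ : X => c := ⟨continuous_const, ‖c‖, fun _ => le_rfl⟩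

@[fun_prop]
theorem add {f g : X → F} (hf : IsBddCont f) (hg : IsBddCont g) :
    IsBddCont fun x => f x + g x := by
  obtain ⟨C, hC⟩ := hf.exists_norm_le
  obtain ⟨D, hD⟩ := hg.exists_norm_le
  exact ⟨hf.continuous.add hg.continuous, C + D, fun x => norm_add_le_of_le (hC x) (hD x)⟩

@[fun_prop]
theorem sub {f g : X → F} (hf : IsBddCont f) (hg : IsBddCont g) :
    IsBddCont fun x => f x - g x := by
  obtain ⟨C, hC⟩ := hf.exists_norm_le
  obtain ⟨D, hD⟩ := hg.exists_norm_le
  exact ⟨hf.continuous.sub hg.continuous, C + D, fun x => norm_sub_le_of_le (hC x) (hD x)⟩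

@[fun_prop]
theorem norm {f : X → F} (hf : IsBddCont f) : IsBddCont fun x => ‖f x‖ :=
  hf.of_norm_le (C := 1) hf.continuous.norm fun x => by simp

@[fun_prop]
theorem smul {𝕜 : Type*} [NormedField 𝕜] [NormedSpace 𝕜 F] {f : X → 𝕜} {g : X → F}
    (hf : IsBddCont f) (hg : IsBddCont g) : IsBddCont fun x => f x • g x := by
  obtain ⟨C, hC⟩ := hf.exists_norm_le
  refine hg.of_norm_le (C := C) (hf.continuous.smul hg.continuous) fun x => ?_
  rw [norm_smul]
  exact mul_le_mul_of_nonneg_right (hC x) (norm_nonneg _)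

@[fun_prop]
theorem mul {𝕜 : Type*} [NormedField 𝕜] {f g : X → 𝕜} (hf : IsBddCont f) (hg : IsBddCont g) :
    IsBddCont fun x => f x * g x :=
  hf.smul hg

@[fun_prop]
theorem pow {𝕜 : Type*} [NormedField 𝕜] {f : X → 𝕜} (hf : IsBddCont f) (n : ℕ) :
    IsBddCont fun x => f x ^ n := by
  obtain ⟨C, hC⟩ := hf.exists_norm_le
  exact ⟨hf.continuous.pow n, C ^ n, fun x => by
    rw [norm_pow]; exact pow_le_pow_left₀ (norm_nonneg _) (hC x) n⟩

@[fun_prop]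
theorem ofReal {f : X → ℝ} (hf : IsBddCont f) : IsBddCont fun x => (f x : ℂ) :=
  hf.of_norm_le (C := 1) (Complex.continuous_ofReal.comp hf.continuous) fun x => by simp

@[fun_prop]
theorem apply {f : X → E2} (hf : IsBddCont f) (j : Fin 2) : IsBddCont fun x => f x j :=
  hf.of_norm_le (C := 1) (by have := hf.continuous; fun_prop) fun x => by
    simpa using PiLp.norm_apply_le (f x) j

end IsBddCont

namespace IsTame

attribute [fun_prop] isBddCont

variable [MeasureSpace X] {f g : X → F}

@[fun_prop]
theorem continuous (hf : IsTame f) : Continuous f := hf.isBddCont.continuous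

@[fun_prop]
theorem add (hf : IsTame f) (hg : IsTame g) : IsTame fun x => f x + g x :=
  ⟨hf.isBddCont.add hg.isBddCont, hf.integrable.add hg.integrable⟩

@[fun_prop]
theorem neg (hf : IsTame f) : IsTame fun x => -f x :=
  ⟨hf.isBddCont.of_norm_le (C := 1) hf.continuous.neg fun x => by simp, hf.integrable.neg⟩

@[fun_prop]
theorem sub (hf : IsTame f) (hg : IsTame g) : IsTame fun x => f x - g x := by
  simpa only [sub_eq_add_neg] using hf.add hg.neg

@[fun_prop]
theorem sum {ι : Type*} {s : Finset ι} {f : ι → X → F} (hf : ∀ i, IsTame (f i)) :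
    IsTame fun x => ∑ i ∈ s, f i x := by
  classical
  induction s using Finset.induction_on with
  | empty => simpa using ⟨IsBddCont.const 0, integrable_zero X F volume⟩
  | insert i s hi ih => simpa only [Finset.sum_insert hi] using (hf i).add ih

variable [OpensMeasurableSpace X] [SecondCountableTopology X]

theorem of_norm_le {g : X → G} {C : ℝ} (hg : IsTame g) (hf : Continuous f)
    (h : ∀ x, ‖f x‖ ≤ C * ‖g x‖) : IsTame f :=
  ⟨hg.isBddCont.of_norm_le hf h,
    (hg.integrable.norm.const_mul C).mono' hf.aestronglyMeasurable (.of_forall h)⟩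

theorem memLp_two (hf : IsTame f) : MemLp f 2 := by
  refine (memLp_two_iff_integrable_sq_norm hf.continuous.aestronglyMeasurable).2 ?_
  obtain ⟨C, hC⟩ := hf.isBddCont.exists_norm_le
  refine (hf.integrable.norm.const_mul C).mono'
    (hf.continuous.norm.pow 2).aestronglyMeasurable (.of_forall fun x => ?_)
  rw [norm_pow, norm_norm, sq]
  exact mul_le_mul_of_nonneg_right (hC x) (norm_nonneg _)

@[fun_prop]
theorem norm (hf : IsTame f) : IsTame fun x => ‖f x‖ :=
  hf.of_norm_le (C := 1) hf.continuous.norm fun x => by simp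

section NormedField

variable {𝕜 : Type*} [NormedField 𝕜] [NormedSpace 𝕜 F]

@[fun_prop]
theorem smul_left {a : X → 𝕜} (ha : IsBddCont a) (hf : IsTame f) : IsTame fun x => a x • f x := by
  obtain ⟨C, hC⟩ := ha.exists_norm_le
  refine hf.of_norm_le (C := C) (ha.continuous.smul hf.continuous) fun x => ?_
  rw [norm_smul]
  exact mul_le_mul_of_nonneg_right (hC x) (norm_nonneg _)

@[fun_prop]
theorem smul_right {a : X → 𝕜} {f : X → F} (ha : IsTame a) (hf : IsBddCont f) :
    IsTame fun x => a x • f x := by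
  obtain ⟨C, hC⟩ := hf.exists_norm_le
  refine ha.of_norm_le (C := C) (ha.continuous.smul hf.continuous) fun x => ?_
  rw [norm_smul, mul_comm]
  exact mul_le_mul_of_nonneg_right (hC x) (norm_nonneg _)

@[fun_prop]
theorem mul_left {a b : X → 𝕜} (ha : IsBddCont a) (hb : IsTame b) : IsTame fun x => a x * b x :=
  smul_left ha hb

@[fun_prop]
theorem mul_right {a b : X → 𝕜} (ha : IsTame a) (hb : IsBddCont b) : IsTame fun x => a x * b x :=
  smul_right ha hb

@[fun_prop]
theorem sq {a : X → 𝕜} (ha : IsTame a) : IsTame fun x => a x ^ 2 := by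
  simpa only [_root_.sq] using ha.mul_right ha.isBddCont

end NormedField

@[fun_prop]
theorem inner {𝕜 : Type*} [RCLike 𝕜] [InnerProductSpace 𝕜 F] (hf : IsBddCont f) (hg : IsTame g) :
    IsTame fun x => inner 𝕜 (f x) (g x) := by
  obtain ⟨C, hC⟩ := hf.exists_norm_le
  refine hg.of_norm_le (C := C) (hf.continuous.inner hg.continuous) fun x => ?_
  exact (norm_inner_le_norm _ _).trans (mul_le_mul_of_nonneg_right (hC x) (norm_nonneg _))

@[fun_prop]
theorem re {f : X → ℂ} (hf : IsTame f) : IsTame fun x => (f x).re :=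
  hf.of_norm_le (C := 1) (Complex.continuous_re.comp hf.continuous) fun x => by
    simpa using Complex.abs_re_le_norm (f x)

@[fun_prop]
theorem im {f : X → ℂ} (hf : IsTame f) : IsTame fun x => (f x).im :=
  hf.of_norm_le (C := 1) (Complex.continuous_im.comp hf.continuous) fun x => by
    simpa using Complex.abs_im_le_norm (f x)

@[fun_prop]
theorem toLp {ι 𝕜 : Type*} [Fintype ι] [RCLike 𝕜] {f : X → ι → 𝕜}
    (hf : ∀ i, IsTame fun x => f x i) :
    IsTame fun x => WithLp.toLp 2 (f x) := by
  refine (sum (s := .univ) fun i => (hf i).norm).of_norm_le (C := 1) ?_ fun x => ?_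
  · exact (PiLp.continuous_toLp 2 _).comp (continuous_pi fun i => (hf i).continuous)
  · rw [one_mul, Real.norm_of_nonneg (Finset.sum_nonneg fun i _ => norm_nonneg _),
      EuclideanSpace.norm_eq, Real.sqrt_le_left (Finset.sum_nonneg fun i _ => norm_nonneg _)]
    exact Finset.sum_sq_le_sq_sum_of_nonneg fun i _ => norm_nonneg _

end IsTame

end FunctionClasses

section SquareIntegrable

variable {X F G : Type*} [MeasureSpace X] [NormedAddCommGroup F] [NormedAddCommGroup G]

theorem lpNorm_two_sq {f : X → F} (hf : MemLp f 2) : ‖f‖₂ ^ 2 = ∫ x, ‖f x‖ ^ 2 := by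
  rw [lpNorm_eq_integral_norm_rpow_toReal two_ne_zero (by simp) hf.1, ← Real.rpow_natCast,
    ← Real.rpow_mul (integral_nonneg fun x => by positivity)]
  simp

theorem integral_norm_mul_norm_le_lpNorm {f : X → F} {g : X → G} (hf : MemLp f 2)
    (hg : MemLp g 2) : ∫ x, ‖f x‖ * ‖g x‖ ≤ ‖f‖₂ * ‖g‖₂ := by
  have h := integral_mul_norm_le_Lp_mul_Lq (μ := volume) (f := fun x => ‖f x‖)
    (g := fun x => ‖g x‖) Real.HolderConjugate.two_two (by simpa using hf.norm)
    (by simpa using hg.norm)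
  simp only [norm_norm, Real.rpow_ofNat] at h
  simpa only [← lpNorm_two_sq hf, ← lpNorm_two_sq hg, ← Real.sqrt_eq_rpow,
    Real.sqrt_sq lpNorm_nonneg] using h

theorem norm_integral_le_mul_lpNorm {H : Type*} [NormedAddCommGroup H] [NormedSpace ℝ H] {f : X → F}
    {g : X → G} {h : X → H} {C : ℝ} (hC : 0 ≤ C) (hf : MemLp f 2) (hg : MemLp g 2)
    (hle : ∀ x, ‖h x‖ ≤ C * (‖f x‖ * ‖g x‖)) : ‖∫ x, h x‖ ≤ C * (‖f‖₂ * ‖g‖₂) := by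
  calc ‖∫ x, h x‖ ≤ ∫ x, C * (‖f x‖ * ‖g x‖) :=
        norm_integral_le_of_norm_le ((hf.norm.integrable_mul hg.norm).const_mul C) (.of_forall hle)
    _ = C * ∫ x, ‖f x‖ * ‖g x‖ := integral_const_mul ..
    _ ≤ C * (‖f‖₂ * ‖g‖₂) :=
        mul_le_mul_of_nonneg_left (integral_norm_mul_norm_le_lpNorm hf hg) hC

theorem lpNorm_two_le_mul {f : X → F} {g : X → G} {C : ℝ} (hC : 0 ≤ C) (hg : MemLp g 2)
    (h : ∀ x, ‖f x‖ ≤ C * ‖g x‖) : ‖f‖₂ ≤ C * ‖g‖₂ := by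
  have hCg : MemLp (fun x => C * ‖g x‖) 2 := hg.norm.const_mul C
  refine (lpNorm_mono_real hCg h).trans_eq ?_
  simpa [Pi.smul_def, abs_of_nonneg hC, lpNorm_norm hg.1] using
    lpNorm_const_smul (p := 2) C (fun x => ‖g x‖) (volume : Measure X)

theorem lpNorm_two_le_mul_add_mul {H : Type*} [NormedAddCommGroup H] {f : X → F} {g : X → G}
    {h : X → H} {C D : ℝ} (hC : 0 ≤ C) (hD : 0 ≤ D) (hg : MemLp g 2) (hh : MemLp h 2)
    (hle : ∀ x, ‖f x‖ ≤ C * ‖g x‖ + D * ‖h x‖) : ‖f‖₂ ≤ C * ‖g‖₂ + D * ‖h‖₂ := by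
  have hCg : MemLp (fun x => C * ‖g x‖) 2 := hg.norm.const_mul C
  have hDh : MemLp (fun x => D * ‖h x‖) 2 := hh.norm.const_mul D
  refine (lpNorm_mono_real (hCg.add hDh) hle).trans ((lpNorm_add_le hCg one_le_two).trans ?_)
  refine add_le_add (lpNorm_two_le_mul hC hg fun x => ?_) (lpNorm_two_le_mul hD hh fun x => ?_)
  · rw [norm_mul, norm_norm, Real.norm_of_nonneg hC]
  · rw [norm_mul, norm_norm, Real.norm_of_nonneg hD]

theorem integrable_inner_of_memLp_two {𝕜 : Type*} [RCLike 𝕜] [InnerProductSpace 𝕜 F] {f g : X → F}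
    (hf : MemLp f 2) (hg : MemLp g 2) : Integrable fun x => inner 𝕜 (f x) (g x) :=
  (hf.norm.integrable_mul hg.norm).mono' (hf.1.inner hg.1)
    (.of_forall fun _ => norm_inner_le_norm _ _)

theorem mul_le_min_add_inv_mul_sq {N : ℝ} (hN : 0 < N) (a b : ℝ) :
    a * b ≤ min (a * b) (N * b ^ 2) + N⁻¹ * a ^ 2 := by
  have hamgm : 0 ≤ N⁻¹ * (N * b - a) ^ 2 + N⁻¹ * a ^ 2 + N * b ^ 2 := by positivity
  have hN_inv_mul : N⁻¹ * N = 1 := inv_mul_cancel₀ hN.ne'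
  rw [min_add, le_min_iff]
  refine ⟨le_add_of_nonneg_right (by positivity), ?_⟩
  linear_combination (1 / 2) * hamgm + (N * b ^ 2 / 2 - a * b) * hN_inv_mul

/- Splitting `‖g‖ ‖p‖ ≤ min (‖g‖ ‖p‖) (N ‖p‖²) + N⁻¹ ‖g‖²`, the first term tends to zero by
dominated convergence and the second is `O(N⁻¹)`. -/
theorem tendsto_integral_norm_mul_norm_zero {ι : Type*} {l : Filter ι} [l.IsCountablyGenerated]
    {g : ι → X → F} {p : X → G} {B : ℝ} (hg : ∀ i, MemLp (g i) 2) (hp : MemLp p 2)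
    (hB : ∀ᶠ i in l, ‖g i‖₂ ≤ B) (h : ∀ x, Tendsto (g · x) l (𝓝 0)) :
    Tendsto (fun i => ∫ x, ‖g i x‖ * ‖p x‖) l (𝓝 0) := by
  refine tendsto_order.2 ⟨fun a ha => .of_forall fun i =>
    ha.trans_le (integral_nonneg fun x => by positivity), fun ε hε => ?_⟩
  obtain ⟨N, hN, hBN⟩ : ∃ N : ℝ, 0 < N ∧ N⁻¹ * B ^ 2 < ε / 2 := by
    refine ⟨2 * (B ^ 2 + 1) / ε, by positivity, ?_⟩
    rw [inv_div, div_mul_eq_mul_div, div_lt_div_iff₀ (by positivity) two_pos]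
    nlinarith
  have hgp (i : ι) : Integrable fun x => ‖g i x‖ * ‖p x‖ := (hg i).norm.integrable_mul hp.norm
  have hpsq : Integrable fun x => N * ‖p x‖ ^ 2 := hp.norm.integrable_sq.const_mul N
  have hmin (i : ι) : Integrable fun x => min (‖g i x‖ * ‖p x‖) (N * ‖p x‖ ^ 2) :=
    (hgp i).inf hpsq
  have hgsq (i : ι) : Integrable fun x => N⁻¹ * ‖g i x‖ ^ 2 :=
    (hg i).norm.integrable_sq.const_mul N⁻¹
  have hlim : Tendsto (fun i => ∫ x, min (‖g i x‖ * ‖p x‖) (N * ‖p x‖ ^ 2)) l (𝓝 0) := by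
    rw [← integral_zero X ℝ]
    refine tendsto_integral_filter_of_dominated_convergence _ (.of_forall fun i => (hmin i).1)
      (.of_forall fun i => .of_forall fun x => ?_) hpsq (.of_forall fun x => ?_)
    · rw [Real.norm_of_nonneg (by positivity)]
      exact min_le_right _ _
    · exact squeeze_zero (fun i => by positivity) (fun i => min_le_left _ _)
        (by simpa using (h x).norm.mul_const ‖p x‖)
  filter_upwards [hlim.eventually_lt_const (half_pos hε), hB] with i hi hBi
  have hBi' : N⁻¹ * ‖g i‖₂ ^ 2 ≤ N⁻¹ * B ^ 2 :=
    mul_le_mul_of_nonneg_left (pow_le_pow_left₀ lpNorm_nonneg hBi 2) (inv_pos.2 hN).le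
  calc ∫ x, ‖g i x‖ * ‖p x‖
      ≤ ∫ x, (min (‖g i x‖ * ‖p x‖) (N * ‖p x‖ ^ 2) + N⁻¹ * ‖g i x‖ ^ 2) :=
        integral_mono (hgp i) ((hmin i).add (hgsq i)) fun x => mul_le_min_add_inv_mul_sq hN _ _
    _ = (∫ x, min (‖g i x‖ * ‖p x‖) (N * ‖p x‖ ^ 2)) + N⁻¹ * ‖g i‖₂ ^ 2 := by
        rw [integral_add (hmin i) (hgsq i), integral_const_mul, lpNorm_two_sq (hg i)]
    _ < ε := by linarith

theorem tendsto_integral_inner_of_lpNorm_le {𝕜 ι : Type*} [RCLike 𝕜] [InnerProductSpace 𝕜 F]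
    {l : Filter ι} [l.IsCountablyGenerated] {f : ι → X → F} {f₀ p : X → F} {B : ℝ}
    (hf : ∀ i, MemLp (f i) 2) (hf₀ : MemLp f₀ 2) (hp : MemLp p 2)
    (hB : ∀ᶠ i in l, ‖f i‖₂ ≤ B) (h : ∀ x, Tendsto (f · x) l (𝓝 (f₀ x))) :
    Tendsto (fun i => ∫ x, inner 𝕜 (f i x) (p x)) l (𝓝 (∫ x, inner 𝕜 (f₀ x) (p x))) := by
  have hzero := tendsto_integral_norm_mul_norm_zero (fun i => (hf i).sub hf₀) hp
    (hB.mono fun i hi => (lpNorm_sub_le (hf i) one_le_two).trans (add_le_add_left hi ‖f₀‖₂))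
    (fun x => by simpa using (h x).sub_const (f₀ x))
  refine tendsto_sub_nhds_zero_iff.1 (squeeze_zero_norm (fun i => ?_) hzero)
  rw [← integral_sub (integrable_inner_of_memLp_two (hf i) hp)
    (integrable_inner_of_memLp_two hf₀ hp)]
  simp only [← inner_sub_left]
  exact norm_integral_le_of_norm_le (((hf i).sub hf₀).norm.integrable_mul hp.norm)
    (.of_forall fun x => norm_inner_le_norm _ _)

theorem lowerSemicontinuous_lpNorm {T : Type*} [TopologicalSpace T] [SequentialSpace T]
    {f : T → X → F} {p : ℝ≥0∞} (hf : ∀ t, MemLp (f t) p) (hc : ∀ x, Continuous fun t => f t x) :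
    LowerSemicontinuous fun t => lpNorm (f t) p volume := by
  refine lowerSemicontinuous_iff_isClosed_preimage.2 fun c => IsSeqClosed.isClosed ?_
  intro s t hs hst
  have hle : eLpNorm (f t) p volume ≤ ENNReal.ofReal c := by
    refine (Lp.eLpNorm_lim_le_liminf_eLpNorm (fun n => (hf (s n)).1) (f t)
      (.of_forall fun x => (hc x).continuousAt.tendsto.comp hst)).trans ?_
    refine liminf_le_of_le (by isBoundedDefault) fun b hb => ?_
    obtain ⟨n, hn⟩ := hb.exists
    refine hn.trans ?_
    rw [← ofReal_lpNorm (hf _)]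
    exact ENNReal.ofReal_le_ofReal (hs n)
  rw [← ofReal_lpNorm (hf t)] at hle
  exact (ENNReal.ofReal_le_ofReal_iff (lpNorm_nonneg.trans (hs 0))).1 hle

section Inner

variable {𝕜 : Type*} [RCLike 𝕜] [InnerProductSpace 𝕜 F] {f g : X → F}

theorem integral_inner_self (hf : MemLp f 2) :
    ∫ x, inner 𝕜 (f x) (f x) = ((‖f‖₂ ^ 2 : ℝ) : 𝕜) := by
  rw [lpNorm_two_sq hf, ← integral_ofReal]
  simp only [inner_self_eq_norm_sq_to_K, RCLike.ofReal_pow]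

theorem norm_integral_inner_le (hf : MemLp f 2) (hg : MemLp g 2) :
    ‖∫ x, inner 𝕜 (f x) (g x)‖ ≤ ‖f‖₂ * ‖g‖₂ := by
  simpa using norm_integral_le_mul_lpNorm zero_le_one hf hg fun x => by
    simpa using norm_inner_le_norm (𝕜 := 𝕜) (f x) (g x)

end Inner

end SquareIntegrable

section Hardy

variable {E F : Type*} [NormedAddCommGroup E] [NormedSpace ℝ E] [NormedAddCommGroup F]
  [NormedSpace ℝ F] {φ : E → F}

theorem enorm_le_lintegral_fderiv_smul [CompleteSpace F] [ProperSpace E] (hφ : ContDiff ℝ 1 φ)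
    (hlim : Tendsto φ (cocompact E) (𝓝 0)) {x : E} (hx : x ≠ 0) :
    ‖φ x‖ₑ ≤ ∫⁻ t in Ioi (1 : ℝ), ‖fderiv ℝ φ (t • x)‖ₑ * ‖x‖ₑ := by
  have hderiv (t : ℝ) : HasDerivAt (fun t : ℝ => φ (t • x)) (fderiv ℝ φ (t • x) x) t := by
    simpa [Function.comp_def] using (hφ.differentiable one_ne_zero
      (t • x)).hasFDerivAt.comp_hasDerivAt t ((hasDerivAt_id t).smul_const x)
  have hcont : Continuous fun t : ℝ => fderiv ℝ φ (t • x) x :=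
    ((hφ.continuous_fderiv one_ne_zero).comp (by fun_prop)).clm_apply continuous_const
  have hle (t : ℝ) : ‖fderiv ℝ φ (t • x) x‖ₑ ≤ ‖fderiv ℝ φ (t • x)‖ₑ * ‖x‖ₑ :=
    ContinuousLinearMap.le_opENorm _ _
  obtain htop | hfin := eq_or_ne (∫⁻ t in Ioi (1 : ℝ), ‖fderiv ℝ φ (t • x)‖ₑ * ‖x‖ₑ) ∞
  · simp [htop]
  have hint : IntegrableOn (fun t : ℝ => fderiv ℝ φ (t • x) x) (Ioi 1) :=
    ⟨hcont.aestronglyMeasurable, (lintegral_mono hle).trans_lt hfin.lt_top⟩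
  have hray : Tendsto (fun t : ℝ => φ (t • x)) atTop (𝓝 0) := by
    rw [← Metric.cobounded_eq_cocompact] at hlim
    refine hlim.comp (tendsto_norm_atTop_iff_cobounded.1 ?_)
    simp only [norm_smul]
    exact tendsto_abs_atTop_atTop.atTop_mul_const (norm_pos_iff.2 hx)
  have hftc := integral_Ioi_of_hasDerivAt_of_tendsto' (fun t _ => hderiv t) hint hray
  rw [one_smul, zero_sub] at hftc
  rw [← enorm_neg, ← hftc]
  exact (enorm_integral_le_lintegral_enorm _).trans (lintegral_mono hle)

variable [FiniteDimensional ℝ E] [MeasurableSpace E] [BorelSpace E]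
  (μ : Measure E) [μ.IsAddHaarMeasure]

theorem lintegral_comp_smul_of_pos {g : E → ℝ≥0∞} (hg : Measurable g) {t : ℝ} (ht : 0 < t) :
    ∫⁻ x, g (t • x) ∂μ = ENNReal.ofReal (t ^ (-(Module.finrank ℝ E : ℝ))) * ∫⁻ x, g x ∂μ := by
  rw [← lintegral_map hg (measurable_const_smul t), Measure.map_addHaar_smul μ ht.ne',
    lintegral_smul_measure, smul_eq_mul, abs_of_pos (by positivity), Real.rpow_neg ht.le,
    Real.rpow_natCast]

theorem lintegral_enorm_div_enorm_le [CompleteSpace F] (hE : 1 < Module.finrank ℝ E)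
    (hφ : ContDiff ℝ 1 φ) (hlim : Tendsto φ (cocompact E) (𝓝 0)) :
    ∫⁻ x, ‖φ x‖ₑ / ‖x‖ₑ ∂μ ≤
      ENNReal.ofReal (Module.finrank ℝ E - 1 : ℝ)⁻¹ * ∫⁻ x, ‖fderiv ℝ φ x‖ₑ ∂μ := by
  have : Nontrivial E := Module.nontrivial_of_finrank_pos (zero_lt_one.trans hE)
  have hE' : -(Module.finrank ℝ E : ℝ) < -1 := neg_lt_neg (by exact_mod_cast hE)
  have hD : Continuous (fderiv ℝ φ) := hφ.continuous_fderiv one_ne_zero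
  have hpow : ∫⁻ t in Ioi (1 : ℝ), ENNReal.ofReal (t ^ (-(Module.finrank ℝ E : ℝ))) =
      ENNReal.ofReal (Module.finrank ℝ E - 1 : ℝ)⁻¹ := by
    rw [← ofReal_integral_eq_lintegral_ofReal (integrableOn_Ioi_rpow_of_lt hE' one_pos)
      ((ae_restrict_mem measurableSet_Ioi).mono fun t ht =>
        Real.rpow_nonneg (one_pos.trans ht).le _), integral_Ioi_rpow_of_lt hE' one_pos,
      Real.one_rpow, neg_div, ← one_div_neg_eq_neg_one_div, one_div]
    congr 2
    ring
  calc ∫⁻ x, ‖φ x‖ₑ / ‖x‖ₑ ∂μ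
      ≤ ∫⁻ x, (∫⁻ t in Ioi (1 : ℝ), ‖fderiv ℝ φ (t • x)‖ₑ) ∂μ := by
        refine lintegral_mono_ae ((measure_eq_zero_iff_ae_notMem.1
          (measure_singleton (μ := μ) 0)).mono fun x hx => ?_)
        rw [mem_singleton_iff] at hx
        rw [ENNReal.div_le_iff (by simpa using hx) enorm_ne_top,
          ← lintegral_mul_const' _ _ enorm_ne_top]
        exact enorm_le_lintegral_fderiv_smul hφ hlim hx
    _ = ∫⁻ t in Ioi (1 : ℝ), ∫⁻ x, ‖fderiv ℝ φ (t • x)‖ₑ ∂μ :=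
        lintegral_lintegral_swap (by fun_prop)
    _ = ∫⁻ t in Ioi (1 : ℝ), ENNReal.ofReal (t ^ (-(Module.finrank ℝ E : ℝ))) *
          ∫⁻ x, ‖fderiv ℝ φ x‖ₑ ∂μ :=
        setLIntegral_congr_fun measurableSet_Ioi fun t ht =>
          lintegral_comp_smul_of_pos μ hD.enorm.measurable (one_pos.trans ht)
    _ = _ := by rw [lintegral_mul_const _ (by fun_prop), hpow]

end Hardy

section Kernel

theorem integral_eq_zero_of_forall_integral_comp_eq_zero {Θ X F : Type*} [MeasurableSpace Θ]
    [MeasurableSpace X] [NormedAddCommGroup F] [NormedSpace ℝ F] [CompleteSpace F]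
    {μ : Measure X} [SFinite μ] (ν : Measure Θ) [IsFiniteMeasure ν] [NeZero ν] {T : Θ → X → X}
    (hT : Measurable ↿T) (hmp : ∀ θ, MeasurePreserving (T θ) μ μ) {g : X → F} (hg : Integrable g μ)
    (h : ∀ x, ∫ θ, g (T θ x) ∂ν = 0) : ∫ x, g x ∂μ = 0 := by
  have hskew : MeasurePreserving (fun p : Θ × X => (p.1, T p.1 p.2)) (ν.prod μ) (ν.prod μ) :=
    (MeasurePreserving.id ν).skew_product hT (.of_forall fun θ => (hmp θ).map_eq)
  have hcomp (θ : Θ) : ∫ x, g (T θ x) ∂μ = ∫ x, g x ∂μ := by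
    have hmap := (hmp θ).map_eq
    rw [← integral_map (hmp θ).aemeasurable (hmap.symm ▸ hg.1), hmap]
  have hswap : ∫ θ, ∫ x, g (T θ x) ∂μ ∂ν = ∫ x, ∫ θ, g (T θ x) ∂ν ∂μ :=
    integral_integral_swap (hskew.integrable_comp_of_integrable (hg.comp_snd ν))
  simp only [hcomp, h, integral_const, smul_zero, smul_eq_zero] at hswap
  exact hswap.resolve_left measureReal_univ_ne_zero

@[simp]
theorem perp_apply_zero (x : E2) : perp x 0 = -x 1 := rfl

@[simp]
theorem perp_apply_one (x : E2) : perp x 1 = x 0 := rfl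

theorem norm_perp (x : E2) : ‖perp x‖ = ‖x‖ := by
  simp [EuclideanSpace.norm_eq, Fin.sum_univ_two, add_comm]

theorem perp_neg (x : E2) : perp (-x) = -perp x := by
  ext j; fin_cases j <;> simp

@[fun_prop]
theorem continuous_perp : Continuous perp := by
  refine (PiLp.continuous_toLp 2 _).comp (continuous_pi fun j => ?_)
  fin_cases j <;> dsimp <;> fun_prop

/-- The rotation of the plane by the angle `θ`, written with `perp` so that its derivative in `θ` is
visibly `perp` of the rotated point. -/
def planeRotation (θ : ℝ) : E2 ≃ₗᵢ[ℝ] E2 :=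
  LinearIsometry.toLinearIsometryEquiv
    { toFun := fun x => Real.cos θ • x + Real.sin θ • perp x
      map_add' := fun x y => by ext j; fin_cases j <;> simp <;> ring
      map_smul' := fun c x => by ext j; fin_cases j <;> simp <;> ring
      norm_map' := fun x => by
        simp only [LinearMap.coe_mk, AddHom.coe_mk, EuclideanSpace.norm_eq, Fin.sum_univ_two]
        congr 1
        simp
        linear_combination (x 0 ^ 2 + x 1 ^ 2) * Real.sin_sq_add_cos_sq θ } rfl

theorem planeRotation_apply (θ : ℝ) (x : E2) :
    planeRotation θ x = Real.cos θ • x + Real.sin θ • perp x := rfl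

theorem hasDerivAt_planeRotation (θ : ℝ) (x : E2) :
    HasDerivAt (fun θ => planeRotation θ x) (perp (planeRotation θ x)) θ := by
  have h := ((Real.hasDerivAt_cos θ).smul_const x).add ((Real.hasDerivAt_sin θ).smul_const (perp x))
  have hperp : perp (planeRotation θ x) = -Real.sin θ • x + Real.cos θ • perp x := by
    ext j; fin_cases j <;> simp [planeRotation_apply]; ring
  rw [hperp]
  exact h

theorem norm_K_le_inv {R : ℝ} (hR : 0 < R) (x : E2) : ‖K R x‖ ≤ R⁻¹ := by
  have hpos : 0 < max R ‖x‖ := hR.trans_le (le_max_left _ _)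
  rw [K, norm_smul, norm_perp, norm_inv, norm_pow, Real.norm_of_nonneg hpos.le, inv_mul_le_iff₀
    (by positivity), ← div_eq_mul_inv, le_div_iff₀ hR, sq]
  exact mul_le_mul (le_max_right _ _) (le_max_left _ _) hR.le hpos.le

theorem enorm_K_le_inv_enorm (R : ℝ) (x : E2) : ‖K R x‖ₑ ≤ ‖x‖ₑ⁻¹ := by
  obtain rfl | hx := eq_or_ne x 0
  · simp
  have hx' : 0 < ‖x‖ := norm_pos_iff.2 hx
  have hpos : 0 < max R ‖x‖ := hx'.trans_le (le_max_right _ _)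
  rw [← ofReal_norm, ← ofReal_norm, ← ofReal_inv_of_pos hx']
  refine ofReal_le_ofReal ?_
  rw [K, norm_smul, norm_perp, norm_inv, norm_pow, Real.norm_of_nonneg hpos.le, inv_mul_le_iff₀
    (by positivity), ← div_eq_mul_inv, le_div_iff₀ hx', sq]
  exact mul_le_mul (le_max_right _ _) (le_max_right _ _) (norm_nonneg _) hpos.le

theorem K_neg (R : ℝ) (x : E2) : K R (-x) = -K R x := by simp [K, perp_neg]

theorem K_sub_comm (R : ℝ) (x y : E2) : K R (x - y) = -K R (y - x) := by
  rw [← K_neg, neg_sub]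

theorem continuous_K {R : ℝ} (hR : 0 < R) : Continuous (K R) := by
  have h (x : E2) : max R ‖x‖ ^ 2 ≠ 0 := (pow_pos (hR.trans_le (le_max_left _ _)) 2).ne'
  exact (Continuous.inv₀ (by fun_prop) h).smul continuous_perp

theorem isBddCont_K_sub {R : ℝ} (hR : 0 < R) (x : E2) : IsBddCont fun y => K R (x - y) :=
  ⟨(continuous_K hR).comp (by fun_prop), R⁻¹, fun y => norm_K_le_inv hR (x - y)⟩

variable {F : Type*} [NormedAddCommGroup F] [NormedSpace ℝ F] [CompleteSpace F] {φ : E2 → F}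

theorem integral_fderiv_perp_planeRotation (hφ : ContDiff ℝ 1 φ) (x : E2) :
    ∫ θ in (0)..(2 * Real.pi), fderiv ℝ φ (planeRotation θ x) (perp (planeRotation θ x)) = 0 := by
  have hcont : Continuous fun θ => planeRotation θ x :=
    continuous_iff_continuousAt.2 fun θ => (hasDerivAt_planeRotation θ x).continuousAt
  have hderiv (θ : ℝ) : HasDerivAt (fun θ => φ (planeRotation θ x))
      (fderiv ℝ φ (planeRotation θ x) (perp (planeRotation θ x))) θ :=
    (hφ.differentiable one_ne_zero _).hasFDerivAt.comp_hasDerivAt θ (hasDerivAt_planeRotation θ x)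
  have hD : Continuous fun θ => fderiv ℝ φ (planeRotation θ x) (perp (planeRotation θ x)) :=
    ((hφ.continuous_fderiv one_ne_zero).comp hcont).clm_apply (continuous_perp.comp hcont)
  rw [intervalIntegral.integral_eq_sub_of_hasDerivAt (fun θ _ => hderiv θ)
    (hD.intervalIntegrable _ _)]
  simp [planeRotation_apply]

/- `K_R` is tangent to the circles centred at the origin and of constant length along each of them,
so the integrand is, on each circle, a multiple of the angular derivative of `φ`. -/
theorem integral_fderiv_apply_K {R : ℝ} (hR : 0 < R) (hφ : ContDiff ℝ 1 φ)
    (hint : Integrable (fderiv ℝ φ)) : ∫ x, fderiv ℝ φ x (K R x) = 0 := by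
  have hD : Continuous fun x => fderiv ℝ φ x (K R x) :=
    (hφ.continuous_fderiv one_ne_zero).clm_apply (continuous_K hR)
  have hg : Integrable fun x => fderiv ℝ φ x (K R x) :=
    (hint.norm.mul_const R⁻¹).mono' hD.aestronglyMeasurable (.of_forall fun x =>
      (fderiv ℝ φ x).le_opNorm_of_le (norm_K_le_inv hR x))
  have hne : NeZero ((volume : Measure ℝ).restrict (Ioc 0 (2 * Real.pi))) :=
    ⟨by simp [Measure.restrict_eq_zero, Real.pi_pos]⟩
  have hmeas : Measurable fun p : ℝ × E2 => planeRotation p.1 p.2 := by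
    simp only [planeRotation_apply]
    fun_prop
  refine integral_eq_zero_of_forall_integral_comp_eq_zero (volume.restrict (Ioc 0 (2 * Real.pi)))
    hmeas (fun θ => (planeRotation θ).measurePreserving) hg fun x => ?_
  simp only [K, map_smul, LinearIsometryEquiv.norm_map]
  rw [integral_smul, ← intervalIntegral.integral_of_le (by positivity),
    integral_fderiv_perp_planeRotation hφ, smul_zero]

theorem integral_fderiv_apply_K_sub {R : ℝ} (hR : 0 < R) (hφ : ContDiff ℝ 1 φ)
    (hint : Integrable (fderiv ℝ φ)) (x : E2) : ∫ y, fderiv ℝ φ y (K R (x - y)) = 0 := by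
  have hψ (z : E2) : fderiv ℝ (fun z => φ (x - z)) z = -fderiv ℝ φ (x - z) :=
    by simpa [Function.comp_def] using ((hφ.differentiable one_ne_zero (x - z)).hasFDerivAt.comp z
      ((hasFDerivAt_id z).const_sub x)).fderiv
  have h := integral_fderiv_apply_K hR (φ := fun z => φ (x - z)) (by fun_prop) (by
    rw [funext hψ]; exact (hint.comp_sub_left x).neg)
  rw [← integral_sub_left_eq_self _ volume x]
  simpa [hψ, integral_neg] using h

end Kernel

section Convolution

variable {R : ℝ} {f g : E2 → ℝ} {F G : E2 → E2}

theorem bddAbove_range_norm_K (hR : 0 < R) : BddAbove (range fun x => ‖K R x‖) :=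
  ⟨R⁻¹, forall_mem_range.2 (norm_K_le_inv hR)⟩

theorem integrable_smul_K (hR : 0 < R) (hf : Integrable f) (x : E2) :
    Integrable fun y => f y • K R (x - y) :=
  hf.smul_bdd _ (isBddCont_K_sub hR x).continuous.aestronglyMeasurable
    (.of_forall fun y => norm_K_le_inv hR (x - y))

theorem integrable_inner_K (hR : 0 < R) (hF : Integrable F) (x : E2) :
    Integrable fun y => ⟪K R (x - y), F y⟫ :=
  (hF.norm.const_mul R⁻¹).mono' ((isBddCont_K_sub hR x).continuous.aestronglyMeasurable.inner hF.1)
    (.of_forall fun _ => (norm_inner_le_norm _ _).trans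
      (mul_le_mul_of_nonneg_right (norm_K_le_inv hR _) (norm_nonneg _)))

theorem convKs_sub (hR : 0 < R) (hf : Integrable f) (hg : Integrable g) (x : E2) :
    convKs R (fun y => f y - g y) x = convKs R f x - convKs R g x := by
  simp only [convKs, sub_smul]
  exact integral_sub (integrable_smul_K hR hf x) (integrable_smul_K hR hg x)

theorem convKv_sub (hR : 0 < R) (hF : Integrable F) (hG : Integrable G) (x : E2) :
    convKv R (fun y => F y - G y) x = convKv R F x - convKv R G x := by
  simp only [convKv, inner_sub_right]
  exact integral_sub (integrable_inner_K hR hF x) (integrable_inner_K hR hG x)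

theorem norm_convKs_le (hR : 0 < R) (hf : Integrable f) (x : E2) :
    ‖convKs R f x‖ ≤ R⁻¹ * ∫ y, ‖f y‖ := by
  rw [← integral_const_mul]
  refine norm_integral_le_of_norm_le (hf.norm.const_mul _) (.of_forall fun y => ?_)
  rw [norm_smul, mul_comm]
  exact mul_le_mul_of_nonneg_right (norm_K_le_inv hR _) (norm_nonneg _)

theorem norm_convKv_le (hR : 0 < R) (hF : Integrable F) (x : E2) :
    ‖convKv R F x‖ ≤ R⁻¹ * ∫ y, ‖F y‖ := by
  rw [← integral_const_mul]
  exact norm_integral_le_of_norm_le (hF.norm.const_mul _) (.of_forall fun _ =>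
    (norm_inner_le_norm _ _).trans
      (mul_le_mul_of_nonneg_right (norm_K_le_inv hR _) (norm_nonneg _)))

theorem isBddCont_convKs (hR : 0 < R) (hf : Integrable f) : IsBddCont (convKs R f) :=
  ⟨(bddAbove_range_norm_K hR).continuous_convolution_right_of_integrable
    (ContinuousLinearMap.lsmul ℝ ℝ) hf (continuous_K hR), _, norm_convKs_le hR hf⟩

theorem isBddCont_convKv (hR : 0 < R) (hF : Integrable F) : IsBddCont (convKv R F) := by
  refine ⟨?_, _, norm_convKv_le hR hF⟩
  have h := (bddAbove_range_norm_K hR).continuous_convolution_right_of_integrable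
    (innerSL ℝ) hF (continuous_K hR)
  refine h.congr fun x => ?_
  exact integral_congr_ae (.of_forall fun y => real_inner_comm (K R (x - y)) (F y))

theorem norm_convKs_le_integral_norm_fderiv (R : ℝ) (hf : ContDiff ℝ 1 f)
    (hlim : Tendsto f (cocompact E2) (𝓝 0)) (hint : Integrable (fderiv ℝ f)) (x : E2) :
    ‖convKs R f x‖ ≤ ∫ y, ‖fderiv ℝ f y‖ := by
  have hD (y : E2) : fderiv ℝ (fun z => f (z + x)) y = fderiv ℝ f (y + x) :=
    fderiv_comp_add_right x
  have hardy := lintegral_enorm_div_enorm_le (volume : Measure E2) (φ := fun z => f (z + x))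
    (by simp) (by fun_prop) (hlim.comp (Homeomorph.addRight x).isClosedEmbedding.tendsto_cocompact)
  simp only [finrank_euclideanSpace, Fintype.card_fin, hD] at hardy
  norm_num at hardy
  refine (ofReal_le_ofReal_iff (by positivity)).1 ?_
  rw [ofReal_norm, ofReal_integral_norm_eq_lintegral_enorm hint]
  calc ‖convKs R f x‖ₑ ≤ ∫⁻ y, ‖f y • K R (x - y)‖ₑ := enorm_integral_le_lintegral_enorm _
    _ ≤ ∫⁻ y, ‖f y‖ₑ / ‖y - x‖ₑ := by
        refine lintegral_mono fun y => ?_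
        rw [enorm_smul, enorm_sub_rev, div_eq_mul_inv]
        exact mul_le_mul_right (enorm_K_le_inv_enorm R _) _
    _ = ∫⁻ y, ‖f (y + x)‖ₑ / ‖y‖ₑ := by
        rw [← lintegral_add_right_eq_self _ x]; simp
    _ ≤ ∫⁻ y, ‖fderiv ℝ f (y + x)‖ₑ := hardy
    _ = ∫⁻ y, ‖fderiv ℝ f y‖ₑ := lintegral_add_right_eq_self (fun y => ‖fderiv ℝ f y‖ₑ) x

theorem integral_inner_convKs (hR : 0 < R) (hf : Integrable f) (hF : Integrable F) :
    ∫ x, ⟪convKs R f x, F x⟫ = -∫ x, f x * convKv R F x := by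
  have hprod : Integrable fun p : E2 × E2 => f p.2 * ⟪K R (p.1 - p.2), F p.1⟫ := by
    refine ((hF.norm.mul_prod hf.norm).const_mul R⁻¹).mono' (hf.1.comp_snd.mul
      (((continuous_K hR).comp (by fun_prop)).aestronglyMeasurable.inner hF.1.comp_fst))
      (.of_forall fun p => ?_)
    rw [norm_mul, mul_comm ‖F p.1‖, mul_left_comm]
    exact mul_le_mul_of_nonneg_left ((norm_inner_le_norm _ _).trans
      (mul_le_mul_of_nonneg_right (norm_K_le_inv hR _) (norm_nonneg _))) (norm_nonneg _)
  calc ∫ x, ⟪convKs R f x, F x⟫ = ∫ x, ∫ y, f y * ⟪K R (x - y), F x⟫ := by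
        refine integral_congr_ae (.of_forall fun x => ?_)
        dsimp only [convKs]
        simp only [real_inner_comm (F x), ← integral_inner (integrable_smul_K hR hf x),
          real_inner_smul_right]
    _ = ∫ y, ∫ x, f y * ⟪K R (x - y), F x⟫ := integral_integral_swap hprod
    _ = -∫ y, f y * convKv R F y := by
        simp only [convKv, integral_const_mul, ← integral_neg, ← mul_neg, ← inner_neg_left,
          ← K_sub_comm]

theorem integral_fderiv_apply_convKs {H : Type*} [NormedAddCommGroup H] [NormedSpace ℝ H]
    [CompleteSpace H] {φ : E2 → H} (hR : 0 < R) (hf : Integrable f) (hφ : ContDiff ℝ 1 φ)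
    (hint : Integrable (fderiv ℝ φ)) : ∫ x, fderiv ℝ φ x (convKs R f x) = 0 := by
  have hprod : Integrable fun p : E2 × E2 => f p.2 • fderiv ℝ φ p.1 (K R (p.1 - p.2)) := by
    have hD : Continuous fun p : E2 × E2 => fderiv ℝ φ p.1 (K R (p.1 - p.2)) :=
      ((hφ.continuous_fderiv one_ne_zero).comp continuous_fst).clm_apply
        ((continuous_K hR).comp (by fun_prop))
    refine ((hint.norm.mul_prod hf.norm).mul_const R⁻¹).mono'
      (hf.1.comp_snd.smul hD.aestronglyMeasurable) (.of_forall fun p => ?_)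
    rw [norm_smul, mul_comm ‖fderiv ℝ φ p.1‖, mul_assoc]
    exact mul_le_mul_of_nonneg_left ((fderiv ℝ φ p.1).le_opNorm_of_le (norm_K_le_inv hR _))
      (norm_nonneg _)
  calc ∫ x, fderiv ℝ φ x (convKs R f x) = ∫ x, ∫ y, f y • fderiv ℝ φ x (K R (x - y)) := by
        refine integral_congr_ae (.of_forall fun x => ?_)
        dsimp only [convKs]
        simp only [← (fderiv ℝ φ x).integral_comp_comm (integrable_smul_K hR hf x), map_smul]
    _ = ∫ y, ∫ x, f y • fderiv ℝ φ x (K R (x - y)) := integral_integral_swap hprod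
    _ = 0 := by
        refine integral_eq_zero_of_ae (.of_forall fun y => ?_)
        simp only [fun x => K_sub_comm R x y, map_neg, smul_neg, integral_neg, integral_smul,
          integral_fderiv_apply_K_sub hR hφ hint, smul_zero, neg_zero, Pi.zero_apply]

theorem convKv_gradient (hR : 0 < R) (hf : ContDiff ℝ 1 f) (hint : Integrable (fderiv ℝ f))
    (x : E2) : convKv R (gradient f) x = 0 := by
  rw [convKv, ← integral_fderiv_apply_K_sub hR hf hint x]
  refine integral_congr_ae (.of_forall fun y => ?_)
  exact (real_inner_comm _ _).trans InnerProductSpace.toDual_symm_apply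

end Convolution

section Schwartz

variable {H : Type*} [NormedAddCommGroup H] [NormedSpace ℝ H]

@[fun_prop]
theorem isTame_schwartz (u : 𝓢(E2, H)) : IsTame u :=
  ⟨⟨u.continuous, _, u.norm_le_seminorm ℝ⟩, u.integrable⟩

@[fun_prop]
theorem isTame_fderiv (u : 𝓢(E2, H)) : IsTame (fderiv ℝ u) :=
  isTame_schwartz (SchwartzMap.fderivCLM ℝ E2 H u)

@[fun_prop]
theorem isTame_fderiv_apply (u : 𝓢(E2, H)) {v : E2 → E2} (hv : IsBddCont v) :
    IsTame fun x => fderiv ℝ u x (v x) := by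
  obtain ⟨C, hC⟩ := hv.exists_norm_le
  refine (isTame_fderiv u).of_norm_le (C := C)
    ((isTame_fderiv u).continuous.clm_apply hv.continuous) fun x => ?_
  rw [mul_comm]
  exact (fderiv ℝ u x).le_opNorm_of_le (hC x)

theorem map_eq_sum_smul (L : E2 →L[ℝ] H) (v : E2) : L v = ∑ j, v j • L (e2 j) := by
  simpa [e2] using congrArg L ((EuclideanSpace.basisFun (Fin 2) ℝ).sum_repr v).symm

/-- The pointwise product `w̄ u` of two Schwartz functions, as a Schwartz function. -/
def innerSchwartz (w u : 𝓢(E2, ℂ)) : 𝓢(E2, ℂ) :=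
  SchwartzMap.pairing ((ContinuousLinearMap.mul ℝ ℂ).comp (Complex.conjCLE : ℂ →L[ℝ] ℂ)) w u

theorem innerSchwartz_apply (w u : 𝓢(E2, ℂ)) (x : E2) :
    innerSchwartz w u x = inner ℂ (w x) (u x) := by
  simp [innerSchwartz, mul_comm]

theorem fderiv_innerSchwartz_apply (w u : 𝓢(E2, ℂ)) (x v : E2) :
    fderiv ℝ (innerSchwartz w u) x v =
      inner ℂ (w x) (fderiv ℝ u x v) + inner ℂ (fderiv ℝ w x v) (u x) := by
  rw [funext (innerSchwartz_apply w u), fderiv_inner_apply ℂ w.differentiableAt u.differentiableAt]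

theorem integral_inner_lineDeriv_eq_neg (w u : 𝓢(E2, ℂ)) (v : E2) :
    ∫ x, inner ℂ (w x) (fderiv ℝ u x v) = -∫ x, inner ℂ (fderiv ℝ w x v) (u x) := by
  simpa [mul_comm, SchwartzMap.lineDerivOp_apply_eq_fderiv] using
    SchwartzMap.integral_bilinear_lineDerivOp_right_eq_neg_left (μ := volume) w u
      ((ContinuousLinearMap.mul ℝ ℂ).comp (Complex.conjCLE : ℂ →L[ℝ] ℂ)) v

end Schwartz

section Magnetic

/-- The gradient of a complex function, as a vector of `ℂ²`. -/
def cgrad (u : E2 → ℂ) (x : E2) : EuclideanSpace ℂ (Fin 2) :=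
  WithLp.toLp 2 fun j => fderiv ℝ u x (e2 j)

/-- The covariant gradient `D_A u = -i∇u + βAu`. -/
def covGrad (β : ℝ) (A : E2 → E2) (u : E2 → ℂ) (x : E2) : EuclideanSpace ℂ (Fin 2) :=
  WithLp.toLp 2 fun j => -Complex.I * fderiv ℝ u x (e2 j) + (β * A x j : ℝ) * u x

/-- The magnetic Laplacian `-Δu - 2iβ A·∇u + β²‖A‖²u`, which is `D_A* D_A u` for divergence-free
`A`. -/
def magLap (β : ℝ) (A : E2 → E2) (u : E2 → ℂ) (x : E2) : ℂ :=
  -lap u x - 2 * β * Complex.I * fderiv ℝ u x (A x) + (β ^ 2 * ‖A x‖ ^ 2 : ℝ) * u x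

/-- `div A = 0` in the sense of distributions, tested against Schwartz functions. -/
def IsWeaklyDivFree (A : E2 → E2) : Prop :=
  ∀ φ : 𝓢(E2, ℂ), ∫ x, fderiv ℝ φ x (A x) = 0

variable {β : ℝ} {A : E2 → E2}

@[fun_prop]
theorem isTame_cgrad (u : 𝓢(E2, ℂ)) : IsTame (cgrad u) := by
  unfold cgrad; fun_prop

@[fun_prop]
theorem isTame_covGrad (hA : IsBddCont A) (u : 𝓢(E2, ℂ)) : IsTame (covGrad β A u) := by
  unfold covGrad; fun_prop

theorem lap_schwartz (u : 𝓢(E2, ℂ)) (x : E2) :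
    lap u x = ∑ j, fderiv ℝ ⇑(∂_{e2 j} u : 𝓢(E2, ℂ)) x (e2 j) := rfl

@[fun_prop]
theorem isTame_lap (u : 𝓢(E2, ℂ)) : IsTame (lap u) := by
  simp only [funext (lap_schwartz u)]; fun_prop

@[fun_prop]
theorem isTame_magLap (hA : IsBddCont A) (u : 𝓢(E2, ℂ)) : IsTame (magLap β A u) := by
  unfold magLap; fun_prop

theorem inner_covGrad_covGrad (w u : 𝓢(E2, ℂ)) (x : E2) :
    inner ℂ (covGrad β A w x) (covGrad β A u x) = inner ℂ (w x) (magLap β A u x) +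
      (∑ j, (inner ℂ (w x) (fderiv ℝ ⇑(∂_{e2 j} u : 𝓢(E2, ℂ)) x (e2 j)) +
        inner ℂ (fderiv ℝ w x (e2 j)) ((∂_{e2 j} u : 𝓢(E2, ℂ)) x)) +
      Complex.I * β * fderiv ℝ (innerSchwartz w u) x (A x)) := by
  simp only [covGrad, magLap, lap_schwartz, fderiv_innerSchwartz_apply,
    SchwartzMap.lineDerivOp_apply_eq_fderiv, map_eq_sum_smul _ (A x), PiLp.inner_apply,
    Fin.sum_univ_two, EuclideanSpace.norm_sq_eq, RCLike.inner_apply, map_add, map_mul, map_neg,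
    Complex.conj_I, Complex.conj_ofReal, Complex.real_smul, Complex.ofReal_mul,
    Complex.ofReal_add, Complex.ofReal_pow, Real.norm_eq_abs, sq_abs]
  ring_nf
  simp only [Complex.I_sq]
  ring

theorem integral_inner_covGrad (hA : IsBddCont A) (hdiv : IsWeaklyDivFree A) (w u : 𝓢(E2, ℂ)) :
    ∫ x, inner ℂ (covGrad β A w x) (covGrad β A u x) = ∫ x, inner ℂ (w x) (magLap β A u x) := by
  have hibp (j : Fin 2) : ∫ x, (inner ℂ (w x) (fderiv ℝ ⇑(∂_{e2 j} u : 𝓢(E2, ℂ)) x (e2 j)) +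
      inner ℂ (fderiv ℝ w x (e2 j)) ((∂_{e2 j} u : 𝓢(E2, ℂ)) x)) = 0 := by
    rw [integral_add (IsTame.integrable (by fun_prop)) (IsTame.integrable (by fun_prop)),
      integral_inner_lineDeriv_eq_neg, neg_add_cancel]
  simp only [inner_covGrad_covGrad]
  rw [integral_add (IsTame.integrable (by fun_prop)) (IsTame.integrable (by fun_prop)),
    integral_add (IsTame.integrable (by fun_prop)) (IsTame.integrable (by fun_prop)),
    integral_finsetSum _ fun j _ => IsTame.integrable (by fun_prop), integral_const_mul, hdiv]
  simp only [hibp, Finset.sum_const_zero, mul_zero, add_zero]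

end Magnetic

section Fields

/-- The bilinear form `2 Im(w̄∇u)` whose diagonal is the current `J[u]`. -/
def bilinJ (w u : E2 → ℂ) (x : E2) : E2 :=
  WithLp.toLp 2 fun j => (2 * inner ℂ (w x) (fderiv ℝ u x (e2 j))).im

/-- The gauge-invariant current `2βA|u|² + J[u]`. -/
def current (β R : ℝ) (u : E2 → ℂ) (x : E2) : E2 :=
  (2 * β * ‖u x‖ ^ 2) • Apot R u x + Jf u x

/-- The scalar potential `K_R ∗ (2βA|u|² + J[u])`. -/
def scalarPot (β R : ℝ) (u : E2 → ℂ) : E2 → ℝ := convKv R (current β R u)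

/-- The Hamiltonian with the potentials generated by `v`, applied to `u`. -/
def ham (β R : ℝ) (v u : E2 → ℂ) (x : E2) : ℂ :=
  magLap β (Apot R v) u x - β * scalarPot β R v x * u x

variable {β R M : ℝ}

theorem cssRHS_eq_ham (u : E2 → ℂ) (x : E2) : cssRHS β R u x = ham β R u u x := rfl

theorem Jf_eq_bilinJ (u : 𝓢(E2, ℂ)) : Jf u = bilinJ u u := by
  ext x j
  simp [Jf, bilinJ, mul_comm]

@[fun_prop]
theorem isTame_bilinJ (w u : 𝓢(E2, ℂ)) : IsTame (bilinJ w u) := by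
  unfold bilinJ; fun_prop

theorem isBddCont_Apot (hR : 0 < R) (u : 𝓢(E2, ℂ)) : IsBddCont (Apot R u) :=
  isBddCont_convKs hR (IsTame.integrable (by fun_prop))

theorem isWeaklyDivFree_Apot (hR : 0 < R) (u : 𝓢(E2, ℂ)) : IsWeaklyDivFree (Apot R u) := fun φ =>
  integral_fderiv_apply_convKs hR (IsTame.integrable (by fun_prop)) (φ.smooth 1)
    (isTame_fderiv φ).integrable

theorem isTame_current (hR : 0 < R) (u : 𝓢(E2, ℂ)) : IsTame (current β R u) := by
  have hA := isBddCont_Apot hR u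
  unfold current
  rw [Jf_eq_bilinJ]
  fun_prop

theorem isBddCont_scalarPot (hR : 0 < R) (u : 𝓢(E2, ℂ)) : IsBddCont (scalarPot β R u) :=
  isBddCont_convKv hR (isTame_current hR u).integrable

theorem isTame_ham (hR : 0 < R) (v u : 𝓢(E2, ℂ)) : IsTame (ham β R v u) := by
  have hA := isBddCont_Apot hR v
  have hV := isBddCont_scalarPot (β := β) hR v
  unfold ham
  fun_prop

end Fields

section Estimates

variable {β R M : ℝ}

theorem norm_bilinJ_le (w u : E2 → ℂ) (x : E2) : ‖bilinJ w u x‖ ≤ 2 * (‖w x‖ * ‖cgrad u x‖) := by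
  rw [EuclideanSpace.norm_eq]
  refine Real.sqrt_le_iff.2 ⟨by positivity, ?_⟩
  rw [mul_pow, mul_pow, EuclideanSpace.norm_sq_eq, Finset.mul_sum, Finset.mul_sum]
  refine Finset.sum_le_sum fun j _ => ?_
  rw [← mul_pow, ← mul_pow]
  refine pow_le_pow_left₀ (norm_nonneg _) ((Complex.abs_im_le_norm _).trans ?_) 2
  rw [norm_mul, Complex.norm_ofNat]
  exact mul_le_mul_of_nonneg_left (norm_inner_le_norm _ _) zero_le_two

theorem gradient_apply (f : E2 → ℝ) (x : E2) (j : Fin 2) :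
    gradient f x j = fderiv ℝ f x (e2 j) := by
  rw [← inner_gradient_left, e2, EuclideanSpace.inner_single_right]
  simp

theorem fderiv_postcompCLM {H H' : Type*} [NormedAddCommGroup H] [NormedSpace ℝ H]
    [NormedAddCommGroup H'] [NormedSpace ℝ H'] (L : H →L[ℝ] H') (ψ : 𝓢(E2, H)) (x : E2) :
    fderiv ℝ (ψ.postcompCLM L) x = L ∘L fderiv ℝ ψ x :=
  (L.hasFDerivAt.comp x (ψ.hasFDerivAt x)).fderiv

/-- The function `2 Im(ūu')`, whose gradient is the part of `J[u'] - J[u]` annihilated by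
`convKv`. -/
def crossIm (u u' : 𝓢(E2, ℂ)) : 𝓢(E2, ℝ) :=
  (innerSchwartz u u').postcompCLM ((2 : ℝ) • Complex.imCLM)

theorem gradient_crossIm (u u' : 𝓢(E2, ℂ)) (x : E2) (j : Fin 2) :
    gradient (crossIm u u') x j = 2 * (fderiv ℝ (innerSchwartz u u') x (e2 j)).im := by
  rw [gradient_apply, crossIm, fderiv_postcompCLM]
  rfl

theorem Jf_sub_Jf (u u' : 𝓢(E2, ℂ)) (x : E2) :
    Jf u' x - Jf u x = bilinJ ⇑(u' - u) ⇑(u + u') x + gradient (crossIm u u') x := by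
  ext j
  have hadd : fderiv ℝ ⇑(u + u') x = fderiv ℝ u x + fderiv ℝ u' x :=
    fderiv_add u.differentiableAt u'.differentiableAt
  simp only [PiLp.sub_apply, PiLp.add_apply, gradient_crossIm, fderiv_innerSchwartz_apply, bilinJ,
    Jf, hadd]
  simp
  ring

theorem abs_norm_sq_sub_norm_sq_le {F : Type*} [NormedAddCommGroup F] (a b : F) :
    |‖b‖ ^ 2 - ‖a‖ ^ 2| ≤ (‖a‖ + ‖b‖) * ‖b - a‖ := by
  rw [sq_sub_sq, abs_mul, add_comm ‖b‖, abs_of_nonneg (by positivity)]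
  exact mul_le_mul_of_nonneg_left (abs_norm_sub_norm_le b a) (by positivity)

theorem integral_norm_add_norm_mul_norm_le {X F G H : Type*} [MeasureSpace X] [NormedAddCommGroup F]
    [NormedAddCommGroup G] [NormedAddCommGroup H] {f : X → F} {g : X → G} {h : X → H}
    (hf : MemLp f 2) (hg : MemLp g 2) (hh : MemLp h 2) :
    ∫ x, (‖f x‖ + ‖g x‖) * ‖h x‖ ≤ (‖f‖₂ + ‖g‖₂) * ‖h‖₂ := by
  simp only [add_mul]
  refine (integral_add (hf.norm.integrable_mul hh.norm)
    (hg.norm.integrable_mul hh.norm)).trans_le ?_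
  exact add_le_add (integral_norm_mul_norm_le_lpNorm hf hh) (integral_norm_mul_norm_le_lpNorm hg hh)

theorem norm_Apot_sub_le (hR : 0 < R) (u u' : 𝓢(E2, ℂ)) (x : E2) :
    ‖Apot R u' x - Apot R u x‖ ≤ R⁻¹ * ((‖u‖₂ + ‖u'‖₂) * ‖u' - u‖₂) := by
  rw [Apot, Apot, ← convKs_sub hR (IsTame.integrable (by fun_prop))
    (IsTame.integrable (by fun_prop))]
  refine (norm_convKs_le hR (IsTame.integrable (by fun_prop)) x).trans ?_
  refine mul_le_mul_of_nonneg_left (le_trans ?_ (integral_norm_add_norm_mul_norm_le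
    (isTame_schwartz u).memLp_two (isTame_schwartz u').memLp_two
    (isTame_schwartz (u' - u)).memLp_two)) (inv_pos.2 hR).le
  refine integral_mono (IsTame.integrable (by fun_prop)) (IsTame.integrable ?_) fun y => ?_
  · fun_prop
  · exact abs_norm_sq_sub_norm_sq_le (u y) (u' y)

theorem norm_Apot_le (hR : 0 < R) (u : 𝓢(E2, ℂ)) (x : E2) : ‖Apot R u x‖ ≤ R⁻¹ * ‖u‖₂ ^ 2 := by
  refine (norm_convKs_le hR (IsTame.integrable (by fun_prop)) x).trans_eq ?_
  simp only [norm_pow, norm_norm, lpNorm_two_sq (isTame_schwartz u).memLp_two]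

theorem isTame_gradient (ψ : 𝓢(E2, ℝ)) : IsTame (gradient ψ) :=
  (isTame_fderiv ψ).of_norm_le (C := 1)
    ((InnerProductSpace.toDual ℝ E2).symm.continuous.comp (isTame_fderiv ψ).continuous) fun x => by
      rw [gradient, LinearIsometryEquiv.norm_map, one_mul]

theorem cgrad_add (u v : 𝓢(E2, ℂ)) (x : E2) : cgrad ⇑(u + v) x = cgrad u x + cgrad v x := by
  ext j
  simp [cgrad, fderiv_add u.differentiableAt v.differentiableAt]

/-- Bounds on the `L²` norms of `u` and of its gradient. -/
def HasH1Bound (M : ℝ) (u : E2 → ℂ) : Prop := ‖u‖₂ ≤ M ∧ ‖cgrad u‖₂ ≤ M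

theorem HasH1Bound.nonneg {u : E2 → ℂ} (h : HasH1Bound M u) : 0 ≤ M := lpNorm_nonneg.trans h.1

theorem hasH1Bound_zero (hM : 0 ≤ M) : HasH1Bound M (0 : 𝓢(E2, ℂ)) := by
  have h : cgrad (0 : E2 → ℂ) = 0 := by ext x j; simp [cgrad]
  simp [HasH1Bound, h, hM]

theorem HasH1Bound.norm_Apot_le {u : 𝓢(E2, ℂ)} (h : HasH1Bound M u) (hR : 0 < R) (x : E2) :
    ‖Apot R u x‖ ≤ R⁻¹ * M ^ 2 :=
  (_root_.norm_Apot_le hR u x).trans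
    (mul_le_mul_of_nonneg_left (pow_le_pow_left₀ lpNorm_nonneg h.1 2) (inv_pos.2 hR).le)

theorem HasH1Bound.norm_Apot_sub_le {u u' : 𝓢(E2, ℂ)} (h : HasH1Bound M u) (h' : HasH1Bound M u')
    (hR : 0 < R) (x : E2) : ‖Apot R u' x - Apot R u x‖ ≤ 2 * R⁻¹ * M * ‖u' - u‖₂ := by
  calc _ ≤ R⁻¹ * ((‖u‖₂ + ‖u'‖₂) * ‖u' - u‖₂) := _root_.norm_Apot_sub_le hR u u' x
    _ ≤ R⁻¹ * ((M + M) * ‖u' - u‖₂) := by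
      have := lpNorm_nonneg (f := u' - u) (p := 2) (μ := volume)
      gcongr
      exacts [h.1, h'.1]
    _ = _ := by ring

theorem current_sub_current (u u' : 𝓢(E2, ℂ)) (x : E2) :
    current β R u' x - current β R u x - gradient (crossIm u u') x =
    (2 * β * (‖u' x‖ ^ 2 - ‖u x‖ ^ 2)) • Apot R u' x +
      (2 * β * ‖u x‖ ^ 2) • (Apot R u' x - Apot R u x) + bilinJ ⇑(u' - u) ⇑(u + u') x := by
  rw [current, current, add_sub_add_comm, Jf_sub_Jf]
  module

theorem scalarPot_sub_scalarPot (hR : 0 < R) (u u' : 𝓢(E2, ℂ)) (x : E2) :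
    scalarPot β R u' x - scalarPot β R u x = convKv R (fun y =>
      current β R u' y - current β R u y - gradient (crossIm u u') y) x := by
  have hu := isTame_current (β := β) hR u
  have hu' := isTame_current (β := β) hR u'
  have hψ := isTame_gradient (crossIm u u')
  rw [convKv_sub hR (hu'.sub hu).integrable hψ.integrable, convKv_sub hR hu'.integrable
    hu.integrable, convKv_gradient hR ((crossIm u u').smooth 1) (isTame_fderiv _).integrable,
    sub_zero, scalarPot, scalarPot]

theorem norm_current_sub_current_le {a a' : ℝ} {u u' : 𝓢(E2, ℂ)} {y : E2}
    (ha : ‖Apot R u' y - Apot R u y‖ ≤ a) (ha' : ‖Apot R u' y‖ ≤ a') :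
    ‖current β R u' y - current β R u y - gradient (crossIm u u') y‖ ≤
      2 * |β| * a' * ((‖u y‖ + ‖u' y‖) * ‖(u' - u) y‖) + 2 * |β| * a * ‖u y‖ ^ 2 +
        2 * ((‖cgrad u y‖ + ‖cgrad u' y‖) * ‖(u' - u) y‖) := by
  rw [current_sub_current]
  refine (norm_add₃_le).trans (add_le_add_three ?_ ?_ ?_)
  · rw [norm_smul, norm_mul, norm_mul, Real.norm_ofNat, Real.norm_eq_abs, Real.norm_eq_abs,
      mul_right_comm]
    have := (norm_nonneg _).trans ha'
    gcongr
    exact abs_norm_sq_sub_norm_sq_le (u y) (u' y)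
  · rw [norm_smul, norm_mul, norm_mul, Real.norm_ofNat, Real.norm_eq_abs, mul_right_comm, norm_pow,
      norm_norm]
    gcongr
  · refine (norm_bilinJ_le _ _ y).trans ?_
    rw [cgrad_add, mul_comm ‖_‖]
    gcongr
    exact norm_add_le _ _

theorem integral_norm_current_sub_current_le {a a' : ℝ} {u u' : 𝓢(E2, ℂ)}
    (ha : ∀ y, ‖Apot R u' y - Apot R u y‖ ≤ a) (ha' : ∀ y, ‖Apot R u' y‖ ≤ a') :
    ∫ y, ‖current β R u' y - current β R u y - gradient (crossIm u u') y‖ ≤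
      2 * |β| * a' * ((‖u‖₂ + ‖u'‖₂) * ‖u' - u‖₂) + 2 * |β| * a * ‖u‖₂ ^ 2 +
        2 * ((‖cgrad u‖₂ + ‖cgrad u'‖₂) * ‖u' - u‖₂) := by
  have := (norm_nonneg _).trans (ha 0)
  have := (norm_nonneg _).trans (ha' 0)
  have hw := (isTame_schwartz (u' - u)).memLp_two
  have h₁ : IsTame fun y => 2 * |β| * a' * ((‖u y‖ + ‖u' y‖) * ‖(u' - u) y‖) := by fun_prop
  have h₂ : IsTame fun y => 2 * |β| * a * ‖u y‖ ^ 2 := by fun_prop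
  have h₃ : IsTame fun y => 2 * ((‖cgrad u y‖ + ‖cgrad u' y‖) * ‖(u' - u) y‖) := by fun_prop
  refine (integral_mono_of_nonneg (.of_forall fun y => norm_nonneg _)
    ((h₁.add h₂).add h₃).integrable
    (.of_forall fun y => norm_current_sub_current_le (ha y) (ha' y))).trans ?_
  rw [integral_add (h₁.add h₂).integrable h₃.integrable, integral_add h₁.integrable h₂.integrable,
    integral_const_mul, integral_const_mul, integral_const_mul,
    lpNorm_two_sq (isTame_schwartz u).memLp_two]
  gcongr
  · exact integral_norm_add_norm_mul_norm_le (isTame_schwartz u).memLp_two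
      (isTame_schwartz u').memLp_two hw
  · exact integral_norm_add_norm_mul_norm_le (isTame_cgrad u).memLp_two
      (isTame_cgrad u').memLp_two hw

theorem norm_scalarPot_sub_le (hR : 0 < R) {u u' : 𝓢(E2, ℂ)} (hu : HasH1Bound M u)
    (hu' : HasH1Bound M u') (x : E2) : ‖scalarPot β R u' x - scalarPot β R u x‖ ≤
      R⁻¹ * (4 * M + 8 * |β| * R⁻¹ * M ^ 3) * ‖u' - u‖₂ := by
  have hM := hu.nonneg
  have hw : 0 ≤ ‖u' - u‖₂ := lpNorm_nonneg
  have hint := ((isTame_current (β := β) hR u').sub (isTame_current (β := β) hR u)).sub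
    (isTame_gradient (crossIm u u'))
  have hcur := integral_norm_current_sub_current_le (β := β) (hu.norm_Apot_sub_le hu' hR)
    (hu'.norm_Apot_le hR)
  rw [scalarPot_sub_scalarPot hR]
  refine (norm_convKv_le hR hint.integrable x).trans ?_
  rw [mul_assoc]
  refine mul_le_mul_of_nonneg_left (hcur.trans ?_) (inv_pos.2 hR).le
  calc _ ≤ 2 * |β| * (R⁻¹ * M ^ 2) * ((M + M) * ‖u' - u‖₂) +
        2 * |β| * (2 * R⁻¹ * M * ‖u' - u‖₂) * M ^ 2 + 2 * ((M + M) * ‖u' - u‖₂) := by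
        have := lpNorm_nonneg (f := u) (p := 2) (μ := volume)
        gcongr
        exacts [hu.1, hu'.1, hu.1, hu.2, hu'.2]
    _ = _ := by ring

theorem norm_fderiv_apply_le (u : E2 → ℂ) (x v : E2) : ‖fderiv ℝ u x v‖ ≤ ‖cgrad u x‖ * ‖v‖ := by
  have h : fderiv ℝ u x v = inner ℂ (WithLp.toLp 2 fun j => (v j : ℂ)) (cgrad u x) := by
    simp [map_eq_sum_smul _ v, cgrad, PiLp.inner_apply, mul_comm]
  rw [h, mul_comm]
  refine (norm_inner_le_norm _ _).trans_eq ?_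
  simp [EuclideanSpace.norm_eq]

theorem scalarPot_zero (β R : ℝ) (x : E2) : scalarPot β R (0 : 𝓢(E2, ℂ)) x = 0 := by
  have h : current β R (0 : E2 → ℂ) = 0 := by
    ext x j
    simp [current, Jf]
  simp [scalarPot, convKv, h]

theorem HasH1Bound.norm_scalarPot_le {u : 𝓢(E2, ℂ)} (hu : HasH1Bound M u) (hR : 0 < R) (x : E2) :
    ‖scalarPot β R u x‖ ≤ R⁻¹ * (4 * M + 8 * |β| * R⁻¹ * M ^ 3) * M := by
  have hM := hu.nonneg
  have h := norm_scalarPot_sub_le (β := β) hR (hasH1Bound_zero hM) hu x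
  rw [scalarPot_zero, sub_zero, sub_zero] at h
  exact h.trans (mul_le_mul_of_nonneg_left hu.1 (by positivity))

theorem ham_sub_ham (u u' v : E2 → ℂ) (x : E2) :
    ham β R u' v x - ham β R u v x =
      -(2 * β * Complex.I * fderiv ℝ v x (Apot R u' x - Apot R u x)) +
        ((β ^ 2 * (‖Apot R u' x‖ ^ 2 - ‖Apot R u x‖ ^ 2) -
          β * (scalarPot β R u' x - scalarPot β R u x) : ℝ) : ℂ) * v x := by
  simp only [ham, magLap, map_sub]
  push_cast
  ring

theorem norm_ham_sub_ham_le {u u' v : E2 → ℂ} {x : E2} {a a' b : ℝ} (h : ‖Apot R u x‖ ≤ a')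
    (h' : ‖Apot R u' x‖ ≤ a') (hsub : ‖Apot R u' x - Apot R u x‖ ≤ a)
    (hV : ‖scalarPot β R u' x - scalarPot β R u x‖ ≤ b) :
    ‖ham β R u' v x - ham β R u v x‖ ≤
      2 * |β| * a * ‖cgrad v x‖ + (2 * β ^ 2 * a' * a + |β| * b) * ‖v x‖ := by
  have hsq : |‖Apot R u' x‖ ^ 2 - ‖Apot R u x‖ ^ 2| ≤ (a' + a') * a :=
    (abs_norm_sq_sub_norm_sq_le _ _).trans (by gcongr; linarith [norm_nonneg (Apot R u x)])
  rw [ham_sub_ham]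
  refine norm_add_le_of_le ?_ ?_
  · calc _ = 2 * |β| * ‖fderiv ℝ v x (Apot R u' x - Apot R u x)‖ := by simp
      _ ≤ 2 * |β| * (‖cgrad v x‖ * a) := by
        gcongr
        exact (norm_fderiv_apply_le v x _).trans (by gcongr)
      _ = _ := by ring
  · rw [norm_mul, Complex.norm_real]
    refine mul_le_mul_of_nonneg_right (norm_sub_le_of_le ?_ ?_) (norm_nonneg _)
    · calc _ = β ^ 2 * |‖Apot R u' x‖ ^ 2 - ‖Apot R u x‖ ^ 2| := by simp
        _ ≤ β ^ 2 * ((a' + a') * a) := by gcongr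
        _ = _ := by ring
    · rw [norm_mul, Real.norm_eq_abs β]
      gcongr

theorem exists_lpNorm_ham_sub_le (hR : 0 < R) (β M : ℝ) : ∃ c, 0 ≤ c ∧ ∀ u u' v : 𝓢(E2, ℂ),
    HasH1Bound M u → HasH1Bound M u' → HasH1Bound M v →
      ‖fun x => ham β R u' v x - ham β R u v x‖₂ ≤ c * ‖u' - u‖₂ := by
  refine ⟨2 * |β| * (2 * R⁻¹ * |M|) * |M| + (2 * β ^ 2 * (R⁻¹ * M ^ 2) * (2 * R⁻¹ * |M|) +
    |β| * (R⁻¹ * (4 * |M| + 8 * |β| * R⁻¹ * |M| ^ 3))) * |M|, by positivity,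
    fun u u' v hu hu' hv => ?_⟩
  have hM := hu.nonneg
  have hw : 0 ≤ ‖u' - u‖₂ := lpNorm_nonneg
  rw [abs_of_nonneg hM]
  refine (lpNorm_two_le_mul_add_mul ?_ ?_ (isTame_cgrad v).memLp_two (isTame_schwartz v).memLp_two
    fun x => norm_ham_sub_ham_le (hu.norm_Apot_le hR x) (hu'.norm_Apot_le hR x)
      (hu.norm_Apot_sub_le hu' hR x) (norm_scalarPot_sub_le hR hu hu' x)).trans ?_
  · positivity
  · positivity
  · calc _ ≤ 2 * |β| * (2 * R⁻¹ * M * ‖u' - u‖₂) * M + (2 * β ^ 2 * (R⁻¹ * M ^ 2) *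
          (2 * R⁻¹ * M * ‖u' - u‖₂) + |β| * (R⁻¹ * (4 * M + 8 * |β| * R⁻¹ * M ^ 3) *
          ‖u' - u‖₂)) * M := by
          gcongr
          exacts [hv.2, hv.1]
      _ = _ := by ring

end Estimates

section Energy

variable {β R M : ℝ} {A : E2 → E2} {a : ℝ}

theorem energy_eq_sq_lpNorm (hR : 0 < R) (u : 𝓢(E2, ℂ)) :
    energy β R u = ‖covGrad β (Apot R u) u‖₂ ^ 2 := by
  have hA := isBddCont_Apot hR u
  rw [lpNorm_two_sq (IsTame.memLp_two (by fun_prop))]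
  simp only [energy, EuclideanSpace.norm_sq_eq, covGrad]

/-- The vector `z v ∈ ℂ²`. -/
def complexSMul (v : E2) (z : ℂ) : EuclideanSpace ℂ (Fin 2) := WithLp.toLp 2 fun j => v j * z

theorem norm_complexSMul (v : E2) (z : ℂ) : ‖complexSMul v z‖ = ‖v‖ * ‖z‖ := by
  simp only [complexSMul, EuclideanSpace.norm_eq, norm_mul, mul_pow, ← Finset.sum_mul,
    Complex.norm_real]
  rw [Real.sqrt_mul (by positivity), Real.sqrt_sq (norm_nonneg z)]

theorem inner_complexSMul_complexSMul (v w : E2) (z z' : ℂ) :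
    inner ℂ (complexSMul v z) (complexSMul w z') = ⟪v, w⟫ * inner ℂ z z' := by
  simp only [complexSMul, PiLp.inner_apply, Fin.sum_univ_two, RCLike.inner_apply, map_mul,
    Complex.conj_ofReal, Complex.ofReal_add, Complex.ofReal_mul, conj_trivial]
  ring

theorem covGrad_eq (A : E2 → E2) (u : E2 → ℂ) (x : E2) :
    covGrad β A u x = -Complex.I • cgrad u x + (β : ℂ) • complexSMul (A x) (u x) := by
  ext j
  simp [covGrad, cgrad, complexSMul, mul_assoc]

theorem norm_covGrad_le (hA : ∀ x, ‖A x‖ ≤ a) (u : E2 → ℂ) (x : E2) :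
    ‖covGrad β A u x‖ ≤ 1 * ‖cgrad u x‖ + |β| * a * ‖u x‖ := by
  rw [covGrad_eq]
  refine norm_add_le_of_le (by simp [norm_smul]) ?_
  rw [norm_smul, norm_complexSMul, Complex.norm_real, Real.norm_eq_abs, ← mul_assoc]
  gcongr
  exact hA x

theorem norm_cgrad_le (hA : ∀ x, ‖A x‖ ≤ a) (u : E2 → ℂ) (x : E2) :
    ‖cgrad u x‖ ≤ 1 * ‖covGrad β A u x‖ + |β| * a * ‖u x‖ := by
  have h : ‖cgrad u x‖ = ‖covGrad β A u x - (β : ℂ) • complexSMul (A x) (u x)‖ := by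
    rw [covGrad_eq, add_sub_cancel_right, norm_smul, norm_neg, Complex.norm_I, one_mul]
  rw [h]
  refine norm_sub_le_of_le (one_mul _).ge ?_
  rw [norm_smul, norm_complexSMul, Complex.norm_real, Real.norm_eq_abs, ← mul_assoc]
  gcongr
  exact hA x

theorem lpNorm_covGrad_le (hA : ∀ x, ‖A x‖ ≤ a) (u : 𝓢(E2, ℂ)) :
    ‖covGrad β A u‖₂ ≤ ‖cgrad u‖₂ + |β| * a * ‖u‖₂ := by
  have ha := (norm_nonneg _).trans (hA 0)
  simpa only [one_mul] using lpNorm_two_le_mul_add_mul zero_le_one (by positivity)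
    (isTame_cgrad u).memLp_two (isTame_schwartz u).memLp_two (norm_covGrad_le hA u)

theorem lpNorm_cgrad_le (hAc : IsBddCont A) (hA : ∀ x, ‖A x‖ ≤ a) (u : 𝓢(E2, ℂ)) :
    ‖cgrad u‖₂ ≤ ‖covGrad β A u‖₂ + |β| * a * ‖u‖₂ := by
  have ha := (norm_nonneg _).trans (hA 0)
  simpa only [one_mul] using lpNorm_two_le_mul_add_mul zero_le_one (by positivity)
    (isTame_covGrad hAc u).memLp_two (isTame_schwartz u).memLp_two (norm_cgrad_le hA u)

theorem covGrad_sub_covGrad (A A' : E2 → E2) (u u' : 𝓢(E2, ℂ)) (x : E2) :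
    covGrad β A' u' x - covGrad β A u x = covGrad β A ⇑(u' - u) x +
      (β : ℂ) • (complexSMul (A' x - A x) (u x) + complexSMul (A' x - A x) ((u' - u) x)) := by
  ext j
  simp [covGrad, complexSMul, fderiv_sub u'.differentiableAt u.differentiableAt]
  ring

theorem two_mul_re_inner_covGrad_complexSMul (A : E2 → E2) (u : E2 → ℂ) (x v : E2) :
    2 * (inner ℂ (covGrad β A u x) (complexSMul v (u x))).re =
      ⟪v, (2 * β * ‖u x‖ ^ 2) • A x + Jf u x⟫ := by
  simp only [covGrad, complexSMul, Jf, PiLp.inner_apply, Fin.sum_univ_two,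
    ← Complex.normSq_eq_norm_sq, Complex.normSq_apply]
  simp only [neg_mul, Complex.ofReal_mul, RCLike.inner_apply, map_add, map_neg, map_mul,
    Complex.conj_I, neg_neg, Complex.conj_ofReal, Complex.add_re, Complex.mul_re,
    Complex.ofReal_re, Complex.ofReal_im, zero_mul, sub_zero, Complex.I_re, Complex.conj_re,
    Complex.I_im, Complex.conj_im, mul_neg, one_mul, sub_neg_eq_add, zero_add, mul_zero,
    Complex.mul_im, add_zero, neg_zero, Complex.add_im, WithLp.equiv_symm_apply, PiLp.add_apply,
    PiLp.smul_apply, smul_eq_mul, Real.ringHom_apply]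
  ring

theorem sq_norm_covGrad_ge (u u' : 𝓢(E2, ℂ)) (x : E2) :
    ‖covGrad β (Apot R u) u x‖ ^ 2 +
      2 * (inner ℂ (covGrad β (Apot R u) ⇑(u' - u) x) (covGrad β (Apot R u) u x)).re +
      β * ⟪Apot R u' x - Apot R u x, current β R u x⟫ -
      2 * |β| * (‖Apot R u' x - Apot R u x‖ * (‖covGrad β (Apot R u) u x‖ * ‖(u' - u) x‖)) ≤
    ‖covGrad β (Apot R u') u' x‖ ^ 2 := by
  set D := covGrad β (Apot R u) u x
  set D' := covGrad β (Apot R u') u' x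
  set a := Apot R u' x - Apot R u x
  have hsq : ‖D'‖ ^ 2 = ‖D‖ ^ 2 + 2 * (inner ℂ D (D' - D)).re + ‖D' - D‖ ^ 2 := by
    have := norm_add_sq (𝕜 := ℂ) D (D' - D)
    rwa [add_sub_cancel] at this
  have hcross : |β * (inner ℂ D (complexSMul a ((u' - u) x))).re| ≤
      |β| * (‖a‖ * (‖D‖ * ‖(u' - u) x‖)) := by
    rw [abs_mul]
    gcongr
    refine (Complex.abs_re_le_norm _).trans ((norm_inner_le_norm _ _).trans_eq ?_)
    rw [norm_complexSMul]
    ring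
  have hlin : (inner ℂ D (D' - D)).re = (inner ℂ (covGrad β (Apot R u) ⇑(u' - u) x) D).re +
      β * ((inner ℂ D (complexSMul a (u x))).re + (inner ℂ D (complexSMul a ((u' - u) x))).re) := by
    rw [covGrad_sub_covGrad, inner_add_right, inner_smul_right, inner_add_right, Complex.add_re,
      Complex.re_ofReal_mul, Complex.add_re]
    congr 1
    exact inner_re_symm (𝕜 := ℂ) D _
  rw [hsq, hlin, current, ← two_mul_re_inner_covGrad_complexSMul]
  linarith [neg_abs_le (β * (inner ℂ D (complexSMul a ((u' - u) x))).re), sq_nonneg ‖D' - D‖]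

theorem norm_sq_sub_norm_sq (a b : ℂ) :
    ‖b‖ ^ 2 - ‖a‖ ^ 2 = 2 * (inner ℂ (b - a) a).re + ‖b - a‖ ^ 2 := by
  have h := norm_add_sq (𝕜 := ℂ) a (b - a)
  have hsymm := inner_re_symm (𝕜 := ℂ) a (b - a)
  rw [add_sub_cancel] at h
  simp only [RCLike.re_to_complex] at h hsymm
  linarith

theorem integral_inner_Apot_sub (hR : 0 < R) (u u' : 𝓢(E2, ℂ)) :
    ∫ x, ⟪Apot R u' x - Apot R u x, current β R u x⟫ =
      -∫ x, (‖u' x‖ ^ 2 - ‖u x‖ ^ 2) * scalarPot β R u x := by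
  have hρ (v : 𝓢(E2, ℂ)) : Integrable fun x => ‖v x‖ ^ 2 := IsTame.integrable (by fun_prop)
  simp only [Apot, ← convKs_sub hR (hρ u') (hρ u)]
  exact integral_inner_convKs hR ((hρ u').sub (hρ u)) (isTame_current hR u).integrable

theorem re_integral_inner_covGrad (hR : 0 < R) (w u : 𝓢(E2, ℂ)) :
    ∫ x, (inner ℂ (covGrad β (Apot R u) w x) (covGrad β (Apot R u) u x)).re =
      (∫ x, inner ℂ (w x) (ham β R u u x)).re +
        β * ∫ x, (inner ℂ (w x) (u x)).re * scalarPot β R u x := by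
  have hA := isBddCont_Apot hR u
  have hV := isBddCont_scalarPot (β := β) hR u
  have hham := isTame_ham (β := β) hR u u
  have hre {f : E2 → ℂ} (hf : IsTame f) : ∫ x, (f x).re = (∫ x, f x).re := integral_re hf.integrable
  rw [hre (by fun_prop), integral_inner_covGrad hA (isWeaklyDivFree_Apot hR u), ← hre (by fun_prop),
    ← hre (by fun_prop), ← integral_const_mul, ← integral_add (IsTame.integrable (by fun_prop))
    (IsTame.integrable (by fun_prop))]
  congr 1 with x
  simp only [ham, RCLike.inner_apply, sub_mul, Complex.sub_re, ← Complex.ofReal_mul, mul_assoc,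
    Complex.re_ofReal_mul]
  ring

theorem energy_sub_energy_ge (hR : 0 < R) (u u' : 𝓢(E2, ℂ)) :
    2 * (∫ x, inner ℂ ((u' - u) x) (ham β R u u x)).re -
      β * (∫ x, ‖(u' - u) x‖ ^ 2 * scalarPot β R u x) -
      2 * |β| * (∫ x, ‖Apot R u' x - Apot R u x‖ *
        (‖covGrad β (Apot R u) u x‖ * ‖(u' - u) x‖)) ≤ energy β R u' - energy β R u := by
  have hA := isBddCont_Apot hR u
  have hA' := isBddCont_Apot hR u'
  have hV := isBddCont_scalarPot (β := β) hR u
  have hcur := isTame_current (β := β) hR u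
  have hmono := integral_mono (IsTame.integrable (by fun_prop)) (IsTame.integrable (by fun_prop))
    (sq_norm_covGrad_ge (β := β) (R := R) u u')
  have hsplit : ∫ x, (‖u' x‖ ^ 2 - ‖u x‖ ^ 2) * scalarPot β R u x =
      2 * (∫ x, (inner ℂ ((u' - u) x) (u x)).re * scalarPot β R u x) +
        ∫ x, ‖(u' - u) x‖ ^ 2 * scalarPot β R u x := by
    rw [← integral_const_mul, ← integral_add (IsTame.integrable (by fun_prop))
      (IsTame.integrable (by fun_prop))]
    refine integral_congr_ae (.of_forall fun x => ?_)
    simp only [norm_sq_sub_norm_sq (u x), sub_apply]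
    ring
  rw [integral_sub (IsTame.integrable (by fun_prop)) (IsTame.integrable (by fun_prop)),
    integral_add (IsTame.integrable (by fun_prop)) (IsTame.integrable (by fun_prop)),
    integral_add (IsTame.integrable (by fun_prop)) (IsTame.integrable (by fun_prop))] at hmono
  simp only [integral_const_mul] at hmono
  rw [re_integral_inner_covGrad hR, integral_inner_Apot_sub hR, hsplit, ← lpNorm_two_sq,
    ← lpNorm_two_sq, ← energy_eq_sq_lpNorm hR, ← energy_eq_sq_lpNorm hR] at hmono
  · linarith
  · exact IsTame.memLp_two (by fun_prop)
  · exact IsTame.memLp_two (by fun_prop)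

theorem exists_energy_sub_energy_ge (hR : 0 < R) (β M : ℝ) : ∃ C, 0 ≤ C ∧ ∀ u u' : 𝓢(E2, ℂ),
    HasH1Bound M u → HasH1Bound M u' →
      2 * (∫ x, inner ℂ ((u' - u) x) (ham β R u u x)).re - C * ‖u' - u‖₂ ^ 2 ≤
        energy β R u' - energy β R u := by
  set V := R⁻¹ * (4 * |M| + 8 * |β| * R⁻¹ * |M| ^ 3) * |M|
  set D := |M| + |β| * (R⁻¹ * M ^ 2) * |M|
  refine ⟨|β| * V + 2 * |β| * (2 * R⁻¹ * |M| * D), by positivity, fun u u' hu hu' => ?_⟩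
  have hM := abs_of_nonneg hu.nonneg
  have hw := (isTame_schwartz (u' - u)).memLp_two
  have hcov := (isTame_covGrad (β := β) (isBddCont_Apot hR u) u).memLp_two
  have hw₀ : 0 ≤ ‖u' - u‖₂ := lpNorm_nonneg
  have hV : β * (∫ x, ‖(u' - u) x‖ ^ 2 * scalarPot β R u x) ≤
      |β| * (V * (‖u' - u‖₂ * ‖u' - u‖₂)) := by
    refine (Real.le_norm_self _).trans ((norm_mul _ _).trans_le ?_)
    refine mul_le_mul_of_nonneg_left ?_ (norm_nonneg β)
    refine norm_integral_le_mul_lpNorm (by positivity) hw hw fun x => ?_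
    rw [norm_mul, norm_pow, norm_norm, mul_comm, ← sq]
    gcongr
    simpa only [V, hM] using hu.norm_scalarPot_le hR x
  have hD : ‖covGrad β (Apot R u) u‖₂ ≤ D := by
    refine (lpNorm_covGrad_le (hu.norm_Apot_le hR) u).trans ?_
    simp only [D, hM]
    gcongr
    exacts [hu.2, hu.1]
  have ha : ∫ x, ‖Apot R u' x - Apot R u x‖ * (‖covGrad β (Apot R u) u x‖ * ‖(u' - u) x‖) ≤
      2 * R⁻¹ * |M| * ‖u' - u‖₂ * (D * ‖u' - u‖₂) := by
    have h := norm_integral_le_mul_lpNorm (C := 2 * R⁻¹ * |M| * ‖u' - u‖₂) (by positivity) hcov hw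
      (h := fun x => ‖Apot R u' x - Apot R u x‖ * (‖covGrad β (Apot R u) u x‖ * ‖(u' - u) x‖))
      fun x => by
        simp only [norm_mul, norm_norm]
        gcongr
        simpa only [hM] using hu.norm_Apot_sub_le hu' hR x
    exact (Real.le_norm_self _).trans (h.trans (by gcongr))
  refine le_trans ?_ (energy_sub_energy_ge hR u u')
  linarith [mul_le_mul_of_nonneg_left ha (by positivity : 0 ≤ 2 * |β|)]

end Energy

section Cutoff

theorem exists_seq_cutoff (E : Type*) [NormedAddCommGroup E] [NormedSpace ℝ E]
    [FiniteDimensional ℝ E] [HasContDiffBump E] : ∃ (φ : ℕ → E → ℝ) (C : ℝ),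
    (∀ n, ContDiff ℝ (⊤ : ℕ∞) (φ n)) ∧ (∀ n, HasCompactSupport (φ n)) ∧ (∀ n x, ‖φ n x‖ ≤ 1) ∧
      (∀ n x, ‖fderiv ℝ (φ n) x‖ ≤ C / (n + 1)) ∧ ∀ x, Tendsto (φ · x) atTop (𝓝 1) := by
  let f : ContDiffBump (0 : E) := ⟨1, 2, one_pos, one_lt_two⟩
  obtain ⟨C, hC⟩ := (f.hasCompactSupport.fderiv (𝕜 := ℝ)).exists_bound_of_continuous
    ((f.contDiff (n := 1)).continuous_fderiv one_ne_zero)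
  refine ⟨fun n x => f ((n + 1 : ℝ)⁻¹ • x), C, fun n => f.contDiff.comp (contDiff_const_smul _),
    fun n => f.hasCompactSupport.comp_smul (by positivity), fun n x => ?_, fun n x => ?_,
    fun x => ?_⟩
  · rw [Real.norm_of_nonneg f.nonneg]
    exact f.le_one
  · rw [fderiv_comp_smul, norm_smul, Real.norm_of_nonneg (by positivity), div_eq_inv_mul]
    gcongr
    exact hC _
  · obtain ⟨N, hN⟩ := exists_nat_ge ‖x‖
    refine tendsto_const_nhds.congr' ?_
    filter_upwards [eventually_ge_atTop N] with n hn
    refine (f.one_of_mem_closedBall ?_).symm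
    have hn' : (N : ℝ) ≤ n := by exact_mod_cast hn
    rw [mem_closedBall_zero_iff, norm_smul, Real.norm_of_nonneg (by positivity),
      inv_mul_le_iff₀ (by positivity)]
    simp only [f, mul_one]
    linarith

theorem tendsto_integral_cutoff_mul {X : Type*} [MeasurableSpace X] {μ : Measure X}
    {φ : ℕ → X → ℝ} (hφ : ∀ n, AEStronglyMeasurable (φ n) μ) (hle : ∀ n x, ‖φ n x‖ ≤ 1)
    (hlim : ∀ x, Tendsto (φ · x) atTop (𝓝 1)) {f : X → ℝ} (hf : Integrable f μ) :
    Tendsto (fun n => ∫ x, φ n x * f x ∂μ) atTop (𝓝 (∫ x, f x ∂μ)) := by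
  refine tendsto_integral_of_dominated_convergence (fun x => ‖f x‖) (fun n => (hφ n).mul hf.1)
    hf.norm (fun n => .of_forall fun x => ?_) (.of_forall fun x => ?_)
  · rw [norm_mul]
    exact mul_le_of_le_one_left (norm_nonneg _) (hle n x)
  · simpa using (hlim x).mul_const (f x)

theorem hasDerivAt_integral_mul_of_hasCompactSupport {X : Type*} [TopologicalSpace X]
    [MeasurableSpace X] [OpensMeasurableSpace X] [SecondCountableTopology X]
    {μ : Measure X} [IsFiniteMeasureOnCompacts μ] {φ : X → ℝ} (hφ : Continuous φ)
    (hs : HasCompactSupport φ) {g g' : ℝ → X → ℝ}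
    (hg : ∀ t, Continuous (g t)) (hg' : Continuous ↿g')
    (hd : ∀ t x, HasDerivAt (fun s => g s x) (g' t x) t) (t : ℝ) :
    HasDerivAt (fun t => ∫ x, φ x * g t x ∂μ) (∫ x, φ x * g' t x ∂μ) t := by
  obtain ⟨C, hC⟩ := ((isCompact_closedBall t 1).prod hs).exists_bound_of_continuousOn
    hg'.continuousOn
  have hgt' (t : ℝ) : Continuous (g' t) := hg'.comp (by fun_prop : Continuous fun x => (t, x))
  refine (hasDerivAt_integral_of_dominated_loc_of_deriv_le (bound := fun x => ‖φ x‖ * C)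
    (Metric.closedBall_mem_nhds t one_pos)
    (.of_forall fun s => (hφ.mul (hg s)).aestronglyMeasurable)
    ((hφ.mul (hg t)).integrable_of_hasCompactSupport hs.mul_right)
    (hφ.mul (hgt' t)).aestronglyMeasurable (.of_forall fun x s hst => ?_)
    ((hφ.norm.mul_const C).integrable_of_hasCompactSupport hs.norm.mul_right)
    (.of_forall fun x s _ => (hd s x).const_mul _)).2
  rw [norm_mul]
  by_cases hx : x ∈ tsupport φ
  · exact mul_le_mul_of_nonneg_left (hC (s, x) ⟨hst, hx⟩) (norm_nonneg _)
  · simp [image_eq_zero_of_notMem_tsupport hx]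

end Cutoff

section LocalizedGreen

variable {β : ℝ} {A : E2 → E2}

theorem covGrad_eq_of_eq_smul {φ : E2 → ℝ} {u : E2 → ℂ} {x : E2} (hφ : DifferentiableAt ℝ φ x)
    (hu : DifferentiableAt ℝ u x) :
    covGrad β A (fun y => φ y • u y) x =
      (φ x : ℂ) • covGrad β A u x - Complex.I • complexSMul (gradient φ x) (u x) := by
  ext j
  simp only [covGrad, complexSMul, fderiv_fun_smul hφ hu, gradient_apply, PiLp.sub_apply,
    PiLp.smul_apply, add_apply, smul_apply, ContinuousLinearMap.smulRight_apply]
  simp only [Complex.real_smul, smul_eq_mul]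
  ring

theorem abs_integral_mul_im_inner_magLap_le (hA : IsBddCont A) (hdiv : IsWeaklyDivFree A)
    {φ : E2 → ℝ} (hφ : ContDiff ℝ (⊤ : ℕ∞) φ) (hs : HasCompactSupport φ) {ε : ℝ}
    (hφ' : ∀ x, ‖fderiv ℝ φ x‖ ≤ ε) (u : 𝓢(E2, ℂ)) :
    |∫ x, φ x * (inner ℂ (u x) (magLap β A u x)).im| ≤ ε * (‖u‖₂ * ‖covGrad β A u‖₂) := by
  let w : 𝓢(E2, ℂ) := (hs.smul_right (f' := u)).toSchwartzMap (hφ.smul (u.smooth ⊤))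
  have hw : ⇑w = fun x => φ x • u x := rfl
  have hcov (x : E2) : (inner ℂ (covGrad β A w x) (covGrad β A u x)).im =
      -(inner ℂ (Complex.I • complexSMul (gradient φ x) (u x)) (covGrad β A u x)).im := by
    have hself := inner_self_im (𝕜 := ℂ) (covGrad β A u x)
    rw [RCLike.im_to_complex] at hself
    rw [hw, covGrad_eq_of_eq_smul (hφ.differentiable (by simp) x) u.differentiableAt,
      inner_sub_left, inner_smul_left, Complex.conj_ofReal, Complex.sub_im,
      Complex.im_ofReal_mul, hself]
    ring
  have him {f : E2 → ℂ} (hf : IsTame f) : ∫ x, (f x).im = (∫ x, f x).im :=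
    integral_im hf.integrable
  have hgreen : ∫ x, φ x * (inner ℂ (u x) (magLap β A u x)).im =
      ∫ x, (inner ℂ (covGrad β A w x) (covGrad β A u x)).im := by
    rw [him (by fun_prop), integral_inner_covGrad hA hdiv, ← him (by fun_prop)]
    congr 1 with x
    rw [hw, inner_smul_left_eq_smul, Complex.smul_im, smul_eq_mul]
  rw [hgreen, ← Real.norm_eq_abs]
  refine norm_integral_le_mul_lpNorm ((norm_nonneg _).trans (hφ' 0)) (isTame_schwartz u).memLp_two
    (isTame_covGrad hA u).memLp_two fun x => ?_
  rw [hcov, norm_neg]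
  refine (Complex.abs_im_le_norm _).trans ((norm_inner_le_norm _ _).trans ?_)
  rw [norm_smul, Complex.norm_I, one_mul, norm_complexSMul, mul_assoc]
  gcongr
  simpa [gradient] using hφ' x

end LocalizedGreen

/-- `W : ℝ × ℝ² → ℂ` is continuously differentiable with time derivative `W'`. -/
structure IsC1Family (W : ℝ → 𝓢(E2, ℂ)) (W' : ℝ → E2 → ℂ) : Prop where
  contDiff : ContDiff ℝ 1 fun p : ℝ × E2 => W p.1 p.2
  hasDerivAt : ∀ t x, HasDerivAt (fun s => W s x) (W' t x) t

namespace IsC1Family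

variable {W Z : ℝ → 𝓢(E2, ℂ)} {W' Z' : ℝ → E2 → ℂ}

theorem const (u : 𝓢(E2, ℂ)) : IsC1Family (fun _ => u) fun _ _ => 0 where
  contDiff := (u.smooth 1).comp contDiff_snd
  hasDerivAt _ _ := hasDerivAt_const _ _

theorem sub (hW : IsC1Family W W') (hZ : IsC1Family Z Z') :
    IsC1Family (fun t => W t - Z t) fun t x => W' t x - Z' t x where
  contDiff := hW.contDiff.sub hZ.contDiff
  hasDerivAt t x := (hW.hasDerivAt t x).sub (hZ.hasDerivAt t x)

theorem comp_add_const (hW : IsC1Family W W') (k : ℝ) :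
    IsC1Family (fun t => W (t + k)) fun t => W' (t + k) where
  contDiff := hW.contDiff.comp (by fun_prop : ContDiff ℝ 1 fun p : ℝ × E2 => (p.1 + k, p.2))
  hasDerivAt t x := (hW.hasDerivAt (t + k) x).comp_add_const t k

theorem continuous (hW : IsC1Family W W') (x : E2) : Continuous fun t => W t x :=
  hW.contDiff.continuous.comp (by fun_prop : Continuous fun t : ℝ => (t, x))

theorem continuous_deriv (hW : IsC1Family W W') : Continuous ↿W' := by
  have h : ↿W' = fun p => fderiv ℝ (fun p : ℝ × E2 => W p.1 p.2) p (1, 0) := by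
    ext ⟨t, x⟩
    have hd := (hW.contDiff.differentiable one_ne_zero (t, x)).hasFDerivAt.comp_hasDerivAt t
      ((hasDerivAt_id t).prodMk (hasDerivAt_const t x))
    exact (hW.hasDerivAt t x).unique hd
  rw [h]
  exact (hW.contDiff.continuous_fderiv one_ne_zero).clm_apply continuous_const

theorem continuous_cgrad (hW : IsC1Family W W') (x : E2) :
    Continuous fun t => cgrad (W t) x := by
  have h (t : ℝ) (v : E2) :
      fderiv ℝ (W t) x v = fderiv ℝ (fun p : ℝ × E2 => W p.1 p.2) (t, x) (0, v) := by
    have hd : HasFDerivAt (W t) _ x := (hW.contDiff.differentiable one_ne_zero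
      (t, x)).hasFDerivAt.comp x ((hasFDerivAt_const t x).prodMk (hasFDerivAt_id x))
    rw [hd.fderiv]
    simp
  have hc := hW.contDiff.continuous_fderiv one_ne_zero
  simp only [cgrad, h]
  fun_prop

theorem hasDerivAt_norm_sq (hW : IsC1Family W W') (t : ℝ) (x : E2) :
    HasDerivAt (fun s => ‖W s x‖ ^ 2) (2 * (inner ℂ (W t x) (W' t x)).re) t := by
  simpa only [real_inner_eq_re_inner ℂ, RCLike.re_to_complex] using (hW.hasDerivAt t x).norm_sq

end IsC1Family

section LinearFlow

variable {β a b N D σ : ℝ}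

theorem abs_integral_mul_re_inner_le {A : E2 → E2} (hA : IsBddCont A) (hdiv : IsWeaklyDivFree A)
    {φ : E2 → ℝ} (hφ : ContDiff ℝ (⊤ : ℕ∞) φ) (hs : HasCompactSupport φ)
    (hφ1 : ∀ x, ‖φ x‖ ≤ 1) {ε : ℝ} (hφ' : ∀ x, ‖fderiv ℝ φ x‖ ≤ ε) {w : 𝓢(E2, ℂ)}
    {w' S : E2 → ℂ} (hS : IsTame S) {V : E2 → ℝ}
    (hw : ∀ x, Complex.I * w' x = magLap β A w x + V x * w x + S x) :
    |∫ x, φ x * (2 * (inner ℂ (w x) (w' x)).re)| ≤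
      2 * (ε * (‖w‖₂ * ‖covGrad β A w‖₂) + ‖w‖₂ * ‖S‖₂) := by
  have hre (x : E2) : φ x * (2 * (inner ℂ (w x) (w' x)).re) =
      2 * (φ x * (inner ℂ (w x) (magLap β A w x)).im + φ x * (inner ℂ (w x) (S x)).im) := by
    have hI : (inner ℂ (w x) (w' x)).re = (inner ℂ (w x) (Complex.I * w' x)).im := by
      rw [← smul_eq_mul, inner_smul_right, Complex.I_mul_im]
    have hV : (inner ℂ (w x) (V x * w x)).im = 0 := by
      rw [← smul_eq_mul, inner_smul_right, Complex.im_ofReal_mul]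
      exact mul_eq_zero_of_right _ (inner_self_im (𝕜 := ℂ) (w x))
    rw [hI, hw, inner_add_right, inner_add_right, Complex.add_im, Complex.add_im, hV]
    ring
  have hφc : IsBddCont φ := ⟨hφ.continuous, 1, hφ1⟩
  have hflux := abs_integral_mul_im_inner_magLap_le (β := β) hA hdiv hφ hs hφ' w
  have hsource : |∫ x, φ x * (inner ℂ (w x) (S x)).im| ≤ 1 * (‖w‖₂ * ‖S‖₂) := by
    rw [← Real.norm_eq_abs]
    refine norm_integral_le_mul_lpNorm zero_le_one (isTame_schwartz w).memLp_two hS.memLp_two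
      fun x => ?_
    rw [norm_mul]
    gcongr
    · exact hφ1 x
    · exact (Complex.abs_im_le_norm _).trans (norm_inner_le_norm _ _)
  simp only [hre]
  rw [integral_const_mul, integral_add (IsTame.integrable (by fun_prop))
    (IsTame.integrable (by fun_prop)), abs_mul, abs_two]
  linarith [abs_add_le (∫ x, φ x * (inner ℂ (w x) (magLap β A w x)).im)
    (∫ x, φ x * (inner ℂ (w x) (S x)).im)]

theorem IsC1Family.abs_sq_lpNorm_sub_sq_lpNorm_le {W : ℝ → 𝓢(E2, ℂ)} {W' : ℝ → E2 → ℂ}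
    (hW : IsC1Family W W') {A : ℝ → E2 → E2} {V : ℝ → E2 → ℝ} {S : ℝ → E2 → ℂ} (hab : a ≤ b)
    (hA : ∀ t, IsBddCont (A t)) (hdiv : ∀ t, IsWeaklyDivFree (A t)) (hS : ∀ t, IsTame (S t))
    (heq : ∀ t x, Complex.I * W' t x = magLap β (A t) (W t) x + V t x * W t x + S t x)
    (hN : ∀ t ∈ Icc a b, ‖W t‖₂ ≤ N) (hD : ∀ t ∈ Icc a b, ‖covGrad β (A t) (W t)‖₂ ≤ D)
    (hσ : ∀ t ∈ Icc a b, ‖S t‖₂ ≤ σ) :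
    |‖W b‖₂ ^ 2 - ‖W a‖₂ ^ 2| ≤ 2 * N * σ * (b - a) := by
  obtain ⟨φ, C, hφ, hs, hφ1, hφ', hlim⟩ := exists_seq_cutoff E2
  have hsq (t : ℝ) : Tendsto (fun n => ∫ x, φ n x * ‖W t x‖ ^ 2) atTop (𝓝 (‖W t‖₂ ^ 2)) := by
    rw [lpNorm_two_sq (isTame_schwartz (W t)).memLp_two]
    exact tendsto_integral_cutoff_mul (fun n => (hφ n).continuous.aestronglyMeasurable) hφ1 hlim
      (IsTame.integrable (by fun_prop))
  have hcut (n : ℕ) : |(∫ x, φ n x * ‖W b x‖ ^ 2) - ∫ x, φ n x * ‖W a x‖ ^ 2| ≤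
      2 * (C / (n + 1) * (N * D) + N * σ) * (b - a) := by
    have hc : Continuous ↿fun t x => 2 * (inner ℂ (W t x) (W' t x)).re :=
      (Complex.continuous_re.comp (hW.contDiff.continuous.inner hW.continuous_deriv)).const_mul 2
    have hd (t : ℝ) := hasDerivAt_integral_mul_of_hasCompactSupport (μ := volume)
      (hφ n).continuous (hs n) (fun t => (W t).continuous.norm.pow 2) hc hW.hasDerivAt_norm_sq t
    refine norm_image_sub_le_of_norm_deriv_le_segment' (fun t _ => (hd t).hasDerivWithinAt)
      (fun t ht => ?_) b (right_mem_Icc.2 hab)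
    · have ht := Ico_subset_Icc_self ht
      have hε := (norm_nonneg _).trans (hφ' n 0)
      have hN0 : 0 ≤ N := lpNorm_nonneg.trans (hN t ht)
      refine (abs_integral_mul_re_inner_le (hA t) (hdiv t) (hφ n) (hs n) (hφ1 n) (hφ' n) (hS t)
        (heq t)).trans ?_
      gcongr
      exacts [lpNorm_nonneg, hN t ht, hD t ht, lpNorm_nonneg, hN t ht, hσ t ht]
  have hbound : Tendsto (fun n : ℕ => 2 * (C / ((n : ℝ) + 1) * (N * D) + N * σ) * (b - a)) atTop
      (𝓝 (2 * (0 * (N * D) + N * σ) * (b - a))) := by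
    have hC : Tendsto (fun n : ℕ => C / ((n : ℝ) + 1)) atTop (𝓝 0) := by
      simpa [div_eq_mul_inv] using (tendsto_one_div_add_atTop_nhds_zero_nat (𝕜 := ℝ)).const_mul C
    exact (((hC.mul_const _).add_const _).const_mul _).mul_const _
  have h := le_of_tendsto_of_tendsto' ((hsq b).sub (hsq a)).abs hbound hcut
  linarith

end LinearFlow

section Stability

variable {β R M σ a b : ℝ} {u v : ℝ → 𝓢(E2, ℂ)} {du dv F : ℝ → E2 → ℂ}

theorem ham_sub (β R : ℝ) (v : E2 → ℂ) (u w : 𝓢(E2, ℂ)) (x : E2) :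
    ham β R v ⇑(u - w) x = ham β R v u x - ham β R v w x := by
  have hfderiv (f g : 𝓢(E2, ℂ)) (y : E2) :
      fderiv ℝ ⇑(f - g) y = fderiv ℝ f y - fderiv ℝ g y :=
    fderiv_sub f.differentiableAt g.differentiableAt
  have hlap : lap ⇑(u - w) x = lap u x - lap w x := by
    simp only [lap_schwartz, sub_eq_add_neg, LineDeriv.lineDerivOp_add, LineDeriv.lineDerivOp_neg]
    simp only [← sub_eq_add_neg, hfderiv, sub_apply, Finset.sum_sub_distrib]
  simp only [ham, magLap, hlap, hfderiv, sub_apply]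
  ring

theorem HasH1Bound.sub {N : ℝ} {u v : 𝓢(E2, ℂ)} (hu : HasH1Bound M u) (hv : HasH1Bound N v) :
    HasH1Bound (M + N) ⇑(u - v) := by
  have hgrad : cgrad ⇑(u - v) = cgrad u - cgrad v := by
    ext x j
    simp [cgrad, fderiv_sub u.differentiableAt v.differentiableAt]
  constructor
  · exact (lpNorm_sub_le (isTame_schwartz u).memLp_two one_le_two).trans (add_le_add hu.1 hv.1)
  · rw [hgrad]
    exact (lpNorm_sub_le (isTame_cgrad u).memLp_two one_le_two).trans (add_le_add hu.2 hv.2)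

theorem abs_sq_lpNorm_sub_sq_lpNorm_le {W : ℝ → 𝓢(E2, ℂ)} {W' : ℝ → E2 → ℂ} {N X : ℝ}
    (hR : 0 < R) (hW : IsC1Family W W') (hF : ∀ t, IsTame (F t))
    (heq : ∀ t x, Complex.I * W' t x = ham β R (v t) (W t) x + F t x) (hab : a ≤ b)
    (hv : ∀ t ∈ Icc a b, HasH1Bound M (v t)) (hWN : ∀ t ∈ Icc a b, HasH1Bound N (W t))
    (hX : ∀ t ∈ Icc a b, ‖W t‖₂ ≤ X) (hσ : ∀ t ∈ Icc a b, ‖F t‖₂ ≤ σ) :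
    |‖W b‖₂ ^ 2 - ‖W a‖₂ ^ 2| ≤ 2 * X * σ * (b - a) := by
  refine hW.abs_sq_lpNorm_sub_sq_lpNorm_le (β := β) (V := fun t x => -(β * scalarPot β R (v t) x))
    (D := N + |β| * (R⁻¹ * M ^ 2) * N) hab
    (fun t => isBddCont_Apot hR (v t)) (fun t => isWeaklyDivFree_Apot hR (v t)) hF
    (fun t x => ?_) hX (fun t ht => ?_) hσ
  · rw [heq, ham]
    push_cast
    ring
  · refine (lpNorm_covGrad_le ((hv t ht).norm_Apot_le hR) (W t)).trans ?_
    gcongr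
    exacts [(hWN t ht).2, (hWN t ht).1]

/-- `u` solves the Chern–Simons–Schrödinger equation, with time derivative `du`. -/
structure IsCSSFlow (β R : ℝ) (u : ℝ → 𝓢(E2, ℂ)) (du : ℝ → E2 → ℂ) : Prop
    extends IsC1Family u du where
  equation : ∀ t x, Complex.I * du t x = ham β R (u t) (u t) x

theorem IsCSSFlow.lpNorm_eq (hu : IsCSSFlow β R u du) (hR : 0 < R) (hab : a ≤ b)
    (hM : ∀ t ∈ Icc a b, HasH1Bound M (u t)) : ‖u b‖₂ = ‖u a‖₂ := by
  have h := abs_sq_lpNorm_sub_sq_lpNorm_le hR hu.toIsC1Family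
    (F := fun _ => ⇑(0 : 𝓢(E2, ℂ))) (σ := 0) (fun _ => isTame_schwartz 0)
    (by simpa using hu.equation) hab hM hM (fun t ht => (hM t ht).1) (by simp)
  rw [mul_zero, zero_mul, abs_nonpos_iff, sub_eq_zero] at h
  exact (sq_eq_sq₀ lpNorm_nonneg lpNorm_nonneg).1 h

theorem exists_pos_forall_lpNorm_sub_le (hR : 0 < R) (β M : ℝ) : ∃ δ > 0,
    ∀ {u v : ℝ → 𝓢(E2, ℂ)} {du dv F : ℝ → E2 → ℂ} {a b σ : ℝ}, IsCSSFlow β R u du →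
      IsC1Family v dv → (∀ t, IsTame (F t)) →
      (∀ t x, Complex.I * dv t x = ham β R (v t) (v t) x - F t x) → b - a ≤ δ →
      (∀ t ∈ Icc a b, HasH1Bound M (u t)) → (∀ t ∈ Icc a b, HasH1Bound M (v t)) →
      (∀ t ∈ Icc a b, ‖F t‖₂ ≤ σ) →
      ∀ t ∈ Icc a b, ‖u t - v t‖₂ ≤ 2 * ‖u a - v a‖₂ + 4 * σ * (b - a) := by
  obtain ⟨c, hc, hlip⟩ := exists_lpNorm_ham_sub_le hR β M
  refine ⟨1 / (4 * (c + 1)), by positivity,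
    fun {u v du dv F a b σ} hu hv hF heq hab hMu hMv hσ t ht => ?_⟩
  have hsource (s : ℝ) (hs : s ∈ Icc a b) :
      ‖fun x => ham β R (u s) (v s) x - ham β R (v s) (v s) x + F s x‖₂ ≤
        σ + c * ‖u s - v s‖₂ := by
    rw [add_comm σ]
    exact (lpNorm_add_le (((isTame_ham hR _ _).sub (isTame_ham hR _ _)).memLp_two)
      one_le_two).trans (add_le_add (hlip _ _ _ (hMv s hs) (hMu s hs) (hMv s hs)) (hσ s hs))
  refine le_of_forall_sq_le_of_bddAbove (f := fun t => ‖u t - v t‖₂) (c := c)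
    (lpNorm_nonneg.trans (hσ t ht)) (fun _ => lpNorm_nonneg)
    ⟨M + M, by rintro _ ⟨s, hs, rfl⟩; exact ((hMu s hs).sub (hMv s hs)).1⟩ ?_
    (fun D hD s hs => ?_) ht
  · rw [le_div_iff₀ (by positivity)] at hab
    nlinarith [ht.1.trans ht.2]
  · have hsub : Icc a s ⊆ Icc a b := Icc_subset_Icc_right hs.2
    have hW := abs_sq_lpNorm_sub_sq_lpNorm_le (β := β) (N := M + M) (σ := σ + c * D) hR
      (hu.toIsC1Family.sub hv) (v := u)
      (F := fun t x => ham β R (u t) (v t) x - ham β R (v t) (v t) x + F t x)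
      (fun t => ((isTame_ham hR _ _).sub (isTame_ham hR _ _)).add (hF t))
      (fun t x => by rw [mul_sub, hu.equation, heq, ham_sub]; ring) hs.1
      (fun t ht => hMu t (hsub ht)) (fun t ht => (hMu t (hsub ht)).sub (hMv t (hsub ht)))
      (fun t ht => hD t (hsub ht))
      (fun t ht => (hsource t (hsub ht)).trans (by gcongr; exact hD t (hsub ht)))
    have hD0 : 0 ≤ D := lpNorm_nonneg.trans (hD s hs)
    have hσ0 : 0 ≤ σ := lpNorm_nonneg.trans (hσ t ht)
    have hmono : 2 * D * (σ + c * D) * (s - a) ≤ 2 * D * (σ + c * D) * (b - a) := by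
      gcongr
      exact hs.2
    linarith [le_abs_self (‖⇑(u s - v s)‖₂ ^ 2 - ‖⇑(u a - v a)‖₂ ^ 2)]

theorem exists_pos_forall_lpNorm_sub_le_mul (hR : 0 < R) (β M : ℝ) : ∃ δ > 0,
    ∀ {u : ℝ → 𝓢(E2, ℂ)} {du : ℝ → E2 → ℂ} {a b : ℝ}, IsCSSFlow β R u du → b - a ≤ δ →
      (∀ t ∈ Icc a b, HasH1Bound M (u t)) →
      ∃ L, ∀ s ∈ Icc a b, ∀ t ∈ Icc a b, ‖u t - u s‖₂ ≤ L * |t - s| := by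
  obtain ⟨δ, hδ, h⟩ := exists_pos_forall_lpNorm_sub_le hR β M
  refine ⟨δ, hδ, fun {u du a b} hu hab hM => ?_⟩
  have hbase (k : ℝ) (hk : a + k ∈ Icc a b) :
      ‖u (a + k) - u a‖₂ ≤ 4 * ‖ham β R (u a) (u a)‖₂ * k := by
    have ha : a ∈ Icc a b := ⟨le_rfl, hk.1.trans hk.2⟩
    have hsub : Icc a (a + k) ⊆ Icc a b := Icc_subset_Icc_right hk.2
    simpa using h hu (.const (u a)) (F := fun _ => ham β R (u a) (u a))
      (fun _ => isTame_ham hR _ _) (fun _ _ => by simp) (by linarith [hk.2])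
      (fun t ht => hM t (hsub ht)) (fun _ _ => hM a ha) (fun _ _ => le_rfl) (a + k)
      (right_mem_Icc.2 hk.1)
  have hfwd (k s : ℝ) (hk : 0 ≤ k) (hs : s ∈ Icc a (b - k)) :
      ‖u (s + k) - u s‖₂ ≤ 8 * ‖ham β R (u a) (u a)‖₂ * k := by
    have hshift : IsCSSFlow β R (fun t => u (t + k)) fun t => du (t + k) :=
      ⟨hu.toIsC1Family.comp_add_const k, fun t => hu.equation (t + k)⟩
    have hstab := h hshift hu.toIsC1Family (F := fun _ => ⇑(0 : 𝓢(E2, ℂ))) (σ := 0)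
      (a := a) (b := b - k) (fun _ => isTame_schwartz 0) (by simpa using hu.equation)
      (by linarith) (fun t ht => hM _ ⟨by linarith [ht.1], by linarith [ht.2]⟩)
      (fun t ht => hM _ ⟨ht.1, by linarith [ht.2]⟩) (by simp) s hs
    have := hbase k ⟨by linarith, by linarith [hs.1, hs.2]⟩
    linarith
  refine ⟨8 * ‖ham β R (u a) (u a)‖₂, fun s hs t ht => ?_⟩
  rcases le_total s t with hst | hst
  · rw [abs_of_nonneg (sub_nonneg.2 hst)]
    simpa using hfwd (t - s) s (sub_nonneg.2 hst) ⟨hs.1, by linarith [ht.2]⟩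
  · rw [abs_sub_comm, abs_of_nonneg (sub_nonneg.2 hst), FunLike.coe_sub, lpNorm_sub_comm]
    simpa using hfwd (s - t) t (sub_nonneg.2 hst) ⟨ht.1, by linarith [hs.2]⟩

end Stability

section Conservation

variable {β R M L a b : ℝ} {u : ℝ → 𝓢(E2, ℂ)} {du : ℝ → E2 → ℂ} {s : ℝ} {T : Set ℝ}

theorem lpNorm_slope_le {t : ℝ} (hts : t ≠ s) (hL : ‖u t - u s‖₂ ≤ L * |t - s|) :
    ‖slope u s t‖₂ ≤ L := by
  have hslope : ⇑(slope u s t) = (t - s)⁻¹ • ⇑(u t - u s) := rfl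
  rw [hslope, lpNorm_const_smul, coe_nnnorm, norm_inv, Real.norm_eq_abs,
    inv_mul_le_iff₀ (abs_pos.2 (sub_ne_zero.2 hts)), mul_comm]
  exact hL

theorem IsC1Family.tendsto_integral_inner_slope (hu : IsC1Family u du)
    (hL : ∀ t ∈ T, ‖u t - u s‖₂ ≤ L * |t - s|) (hdu : MemLp (du s) 2) {p : E2 → ℂ}
    (hp : MemLp p 2) :
    Tendsto (fun t => ∫ x, inner ℂ (slope u s t x) (p x)) (𝓝[T \ {s}] s)
      (𝓝 (∫ x, inner ℂ (du s x) (p x))) :=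
  tendsto_integral_inner_of_lpNorm_le (fun t => (isTame_schwartz (slope u s t)).memLp_two) hdu hp
    (eventually_mem_nhdsWithin.mono fun t ht => lpNorm_slope_le ht.2 (hL t ht.1))
    fun x => hasDerivWithinAt_iff_tendsto_slope.1 (hu.hasDerivAt s x).hasDerivWithinAt

theorem IsC1Family.lpNorm_deriv_le (hu : IsC1Family u du) (hs : AccPt s (𝓟 T))
    (hL : ∀ t ∈ T, ‖u t - u s‖₂ ≤ L * |t - s|) (hdu : MemLp (du s) 2) : ‖du s‖₂ ≤ L := by
  have := accPt_principal_iff_nhdsWithin.1 hs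
  have hle : ‖∫ x, inner ℂ (du s x) (du s x)‖ ≤ L * ‖du s‖₂ := by
    refine le_of_tendsto (hu.tendsto_integral_inner_slope hL hdu hdu).norm ?_
    filter_upwards [self_mem_nhdsWithin] with t ht
    exact (norm_integral_inner_le (isTame_schwartz (slope u s t)).memLp_two hdu).trans
      (mul_le_mul_of_nonneg_right (lpNorm_slope_le ht.2 (hL t ht.1)) lpNorm_nonneg)
  rw [integral_inner_self hdu, RCLike.norm_ofReal, abs_sq, sq] at hle
  obtain ⟨t, ht⟩ := this.nonempty_of_mem self_mem_nhdsWithin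
  have hL0 : 0 ≤ L := lpNorm_nonneg.trans (lpNorm_slope_le ht.2 (hL t ht.1))
  rcases (lpNorm_nonneg : 0 ≤ ‖du s‖₂).eq_or_lt with h0 | hpos
  · exact h0.ge.trans hL0
  · exact le_of_mul_le_mul_right hle hpos

theorem re_integral_inner_sub_eq (u : ℝ → 𝓢(E2, ℂ)) (p : E2 → ℂ) (s t : ℝ) :
    (∫ x, inner ℂ ((u t - u s) x) (p x)).re =
      (t - s) * (∫ x, inner ℂ (slope u s t x) (p x)).re := by
  have hsmul : u t - u s = (t - s) • slope u s t := (sub_smul_slope u s t).symm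
  simp only [hsmul, smul_apply, inner_smul_left_eq_smul, integral_smul, Complex.smul_re,
    smul_eq_mul]

namespace IsCSSFlow

theorem isTame_deriv (hu : IsCSSFlow β R u du) (hR : 0 < R) (t : ℝ) : IsTame (du t) := by
  have h : du t = fun x => -Complex.I * ham β R (u t) (u t) x := by
    ext x
    simp [← hu.equation, ← mul_assoc]
  have hham := isTame_ham (β := β) hR (u t) (u t)
  rw [h]
  fun_prop

theorem lpNorm_ham_eq (hu : IsCSSFlow β R u du) (t : ℝ) :
    ‖ham β R (u t) (u t)‖₂ = ‖du t‖₂ := by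
  have h : ham β R (u t) (u t) = Complex.I • du t := funext fun x => (hu.equation t x).symm
  simp [h, lpNorm_const_smul]

theorem tendsto_re_integral_inner_slope_ham (hu : IsCSSFlow β R u du) (hR : 0 < R)
    (hL : ∀ t ∈ T, ‖u t - u s‖₂ ≤ L * |t - s|) :
    Tendsto (fun t => (∫ x, inner ℂ (slope u s t x) (ham β R (u s) (u s) x)).re)
      (𝓝[T \ {s}] s) (𝓝 0) := by
  have hdu := (hu.isTame_deriv hR s).memLp_two
  have hzero : (∫ x, inner ℂ (du s x) (ham β R (u s) (u s) x)).re = 0 := by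
    simp only [← hu.equation, ← smul_eq_mul, inner_smul_right]
    rw [integral_smul, integral_inner_self hdu]
    simp [-Complex.ofReal_pow]
  rw [← hzero]
  exact (Complex.continuous_re.tendsto _).comp
    (hu.tendsto_integral_inner_slope hL hdu (isTame_ham hR _ _).memLp_two)

theorem eventually_neg_mul_le_energy_sub (hu : IsCSSFlow β R u du) (hR : 0 < R)
    (hM : ∀ t ∈ T, HasH1Bound M (u t)) (hs : s ∈ T)
    (hL : ∀ t ∈ T, ‖u t - u s‖₂ ≤ L * |t - s|) {ε : ℝ} (hε : 0 < ε) :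
    ∀ᶠ t in 𝓝[T] s, -(ε * |t - s|) ≤ energy β R (u t) - energy β R (u s) := by
  obtain ⟨C, hC, henergy⟩ := exists_energy_sub_energy_ge hR β M
  rw [← insert_sdiff_self_of_mem hs, nhdsWithin_insert, eventually_sup]
  refine ⟨by simp, ?_⟩
  have hlin := (hu.tendsto_re_integral_inner_slope_ham hR hL).eventually
    (Metric.ball_mem_nhds 0 (by positivity : 0 < ε / 4))
  have hquad : Tendsto (fun t => C * (L ^ 2 * |t - s|)) (𝓝[T \ {s}] s) (𝓝 0) := by
    refine (Continuous.tendsto' ?_ s _ (by simp)).mono_left nhdsWithin_le_nhds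
    fun_prop
  filter_upwards [hlin, hquad.eventually_le_const (half_pos hε), self_mem_nhdsWithin]
    with t hlin hquad ht
  rw [dist_zero_right, Real.norm_eq_abs] at hlin
  have hpair : |(∫ x, inner ℂ ((u t - u s) x) (ham β R (u s) (u s) x)).re| ≤
      |t - s| * (ε / 4) := by
    rw [re_integral_inner_sub_eq, abs_mul]
    gcongr
  have hsq : C * ‖u t - u s‖₂ ^ 2 ≤ ε / 2 * |t - s| := by
    calc _ ≤ C * (L * |t - s|) ^ 2 := by gcongr; exacts [lpNorm_nonneg, hL t ht.1]
      _ = C * (L ^ 2 * |t - s|) * |t - s| := by ring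
      _ ≤ _ := by gcongr
  linarith [henergy (u s) (u t) (hM s hs) (hM t ht.1), (abs_le.1 hpair).1]

theorem exists_neg_mul_le_energy_sub (hu : IsCSSFlow β R u du) (hR : 0 < R) (hab : a < b)
    (hM : ∀ t ∈ Icc a b, HasH1Bound M (u t))
    (hL : ∀ s ∈ Icc a b, ∀ t ∈ Icc a b, ‖u t - u s‖₂ ≤ L * |t - s|) :
    ∃ K, 0 ≤ K ∧ ∀ s ∈ Icc a b, ∀ t ∈ Icc a b,
      -(K * |t - s|) ≤ energy β R (u t) - energy β R (u s) := by
  obtain ⟨C, hC, henergy⟩ := exists_energy_sub_energy_ge hR β M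
  have hderiv (s : ℝ) (hs : s ∈ Icc a b) : ‖ham β R (u s) (u s)‖₂ ≤ L := by
    rw [hu.lpNorm_ham_eq]
    exact hu.lpNorm_deriv_le (uniqueDiffOn_Icc hab s hs).accPt (hL s hs)
      (hu.isTame_deriv hR s).memLp_two
  have hL0 : 0 ≤ L := lpNorm_nonneg.trans (hderiv a (left_mem_Icc.2 hab.le))
  have := sub_pos.2 hab
  refine ⟨2 * L ^ 2 + C * L ^ 2 * (b - a), by positivity, fun s hs t ht => ?_⟩
  have hpair : ‖∫ x, inner ℂ ((u t - u s) x) (ham β R (u s) (u s) x)‖ ≤ L * |t - s| * L :=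
    (norm_integral_inner_le (isTame_schwartz _).memLp_two (isTame_ham hR _ _).memLp_two).trans
      (mul_le_mul (hL s hs t ht) (hderiv s hs) lpNorm_nonneg (by positivity))
  have hsq : C * ‖u t - u s‖₂ ^ 2 ≤ C * L ^ 2 * (b - a) * |t - s| := by
    calc _ ≤ C * (L * |t - s|) ^ 2 := by gcongr; exacts [lpNorm_nonneg, hL s hs t ht]
      _ = C * L ^ 2 * |t - s| * |t - s| := by ring
      _ ≤ _ := by gcongr; exact abs_sub_le_of_le_of_le ht.1 ht.2 hs.1 hs.2
  have hre := (abs_le.1 ((Complex.abs_re_le_norm _).trans hpair)).1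
  linarith [henergy (u s) (u t) (hM s hs) (hM t ht)]

theorem continuousOn_energy (hu : IsCSSFlow β R u du) (hR : 0 < R) (hab : a < b)
    (hM : ∀ t ∈ Icc a b, HasH1Bound M (u t))
    (hL : ∀ s ∈ Icc a b, ∀ t ∈ Icc a b, ‖u t - u s‖₂ ≤ L * |t - s|) :
    ContinuousOn (fun t => energy β R (u t)) (Icc a b) := by
  obtain ⟨K, hK, hlower⟩ := hu.exists_neg_mul_le_energy_sub hR hab hM hL
  refine (LipschitzOnWith.of_dist_le_mul (K := K.toNNReal) fun s hs t ht => ?_).continuousOn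
  have hst := hlower s hs t ht
  have hts := hlower t ht s hs
  rw [abs_sub_comm t s] at hst
  rw [Real.dist_eq, Real.dist_eq, Real.coe_toNNReal _ hK, abs_le]
  constructor <;> linarith

theorem energy_eq (hu : IsCSSFlow β R u du) (hR : 0 < R)
    (hM : ∀ t ∈ uIcc a b, HasH1Bound M (u t)) : energy β R (u a) = energy β R (u b) := by
  obtain ⟨δ, hδ, hlip⟩ := exists_pos_forall_lpNorm_sub_le_mul hR β M
  refine eq_of_forall_dist_le_imp_eq (E := fun t => energy β R (u t)) hδ
    fun s hs t ht hst hδst => ?_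
  rcases hst.eq_or_lt with rfl | hlt
  · rfl
  have hM' : ∀ r ∈ Icc s t, HasH1Bound M (u r) := fun r hr =>
    hM r (uIcc_subset_uIcc hs ht (Icc_subset_uIcc hr))
  obtain ⟨L, hL⟩ := hlip hu hδst hM'
  exact eq_of_forall_eventually_neg_mul_le hst (hu.continuousOn_energy hR hlt hM' hL)
    fun r hr ε hε => hu.eventually_neg_mul_le_energy_sub hR hM' hr (hL r hr) hε

end IsCSSFlow

end Conservation

section Diamagnetic

variable {β R m : ℝ} {A : E2 → E2}

theorem norm_fderiv_norm_sq_le (β : ℝ) (A : E2 → E2) {u : E2 → ℂ} {x : E2}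
    (hu : DifferentiableAt ℝ u x) :
    ‖fderiv ℝ (fun y => ‖u y‖ ^ 2) x‖ ≤ 2 * (‖u x‖ * ‖covGrad β A u x‖) := by
  refine ContinuousLinearMap.opNorm_le_bound _ (by positivity) fun v => ?_
  have hgrad : inner ℂ (complexSMul v (u x)) (cgrad u x) = inner ℂ (u x) (fderiv ℝ u x v) := by
    simp [complexSMul, cgrad, PiLp.inner_apply, map_eq_sum_smul _ v]
    ring
  have hphase : (Complex.I * (β * inner ℂ (complexSMul v (u x)) (complexSMul (A x) (u x)))).re =
      0 := by
    rw [inner_complexSMul_complexSMul, Complex.I_mul_re, Complex.im_ofReal_mul,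
      Complex.im_ofReal_mul, ← RCLike.im_to_complex, inner_self_im, mul_zero, mul_zero, neg_zero]
  have hcov : (inner ℂ (u x) (fderiv ℝ u x v)).re =
      (Complex.I * inner ℂ (complexSMul v (u x)) (covGrad β A u x)).re := by
    rw [← hgrad, covGrad_eq, inner_add_right, inner_smul_right, inner_smul_right, mul_add,
      Complex.add_re, hphase, add_zero, ← mul_assoc, mul_neg, Complex.I_mul_I, neg_neg, one_mul]
  have hderiv : fderiv ℝ (fun y => ‖u y‖ ^ 2) x v = 2 * (inner ℂ (u x) (fderiv ℝ u x v)).re := by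
    rw [hu.hasFDerivAt.norm_sq.fderiv]
    simp only [smul_apply, ContinuousLinearMap.comp_apply, innerSL_apply_apply, nsmul_eq_mul,
      Nat.cast_ofNat, real_inner_eq_re_inner ℂ, RCLike.re_to_complex]
  rw [hderiv, hcov, norm_mul, Real.norm_two, mul_assoc]
  gcongr
  calc ‖(Complex.I * inner ℂ (complexSMul v (u x)) (covGrad β A u x)).re‖
      ≤ ‖Complex.I * inner ℂ (complexSMul v (u x)) (covGrad β A u x)‖ := Complex.abs_re_le_norm _
    _ ≤ ‖complexSMul v (u x)‖ * ‖covGrad β A u x‖ := by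
        rw [norm_mul, Complex.norm_I, one_mul]
        exact norm_inner_le_norm _ _
    _ = ‖u x‖ * ‖covGrad β A u x‖ * ‖v‖ := by
        rw [norm_complexSMul]
        ring

theorem norm_Apot_le_lpNorm_mul_lpNorm_covGrad (R β : ℝ) (hA : IsBddCont A) (u : 𝓢(E2, ℂ))
    (x : E2) : ‖Apot R u x‖ ≤ 2 * (‖u‖₂ * ‖covGrad β A u‖₂) := by
  have hle (y : E2) := norm_fderiv_norm_sq_le β A u.differentiableAt (x := y)
  have hC1 : ContDiff ℝ 1 fun y => ‖u y‖ ^ 2 := (u.smooth 1).norm_sq ℝ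
  have hlim : Tendsto (fun y => ‖u y‖ ^ 2) (cocompact E2) (𝓝 0) := by
    simpa using u.tendsto_cocompact.norm.pow 2
  have hbound : Integrable fun y => 2 * (‖u y‖ * ‖covGrad β A u y‖) :=
    IsTame.integrable (by fun_prop)
  have hint : Integrable (fderiv ℝ fun y => ‖u y‖ ^ 2) :=
    hbound.mono' (hC1.continuous_fderiv one_ne_zero).aestronglyMeasurable (.of_forall hle)
  calc ‖Apot R u x‖ ≤ ∫ y, ‖fderiv ℝ (fun y => ‖u y‖ ^ 2) y‖ :=
        norm_convKs_le_integral_norm_fderiv R hC1 hlim hint x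
    _ ≤ ∫ y, 2 * (‖u y‖ * ‖covGrad β A u y‖) := integral_mono hint.norm hbound hle
    _ ≤ 2 * (‖u‖₂ * ‖covGrad β A u‖₂) := by
        rw [integral_const_mul]
        gcongr
        exact integral_norm_mul_norm_le_lpNorm (isTame_schwartz u).memLp_two
          (isTame_covGrad hA u).memLp_two

theorem lpNorm_cgrad_le_mul_lpNorm_covGrad_Apot (hR : 0 < R) {u : 𝓢(E2, ℂ)} (hu : ‖u‖₂ ≤ m) :
    ‖cgrad u‖₂ ≤ (1 + 2 * |β| * m ^ 2) * ‖covGrad β (Apot R u) u‖₂ := by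
  have hA := isBddCont_Apot hR u
  have h := lpNorm_cgrad_le (β := β) hA (norm_Apot_le_lpNorm_mul_lpNorm_covGrad R β hA u) u
  have hsq : ‖u‖₂ ^ 2 ≤ m ^ 2 := pow_le_pow_left₀ lpNorm_nonneg hu 2
  nlinarith [mul_le_mul_of_nonneg_left hsq (mul_nonneg (abs_nonneg β)
    (lpNorm_nonneg (f := covGrad β (Apot R u) u) (p := 2) (μ := volume)))]

theorem lpNorm_covGrad_Apot_le_mul_lpNorm_cgrad {u : 𝓢(E2, ℂ)} (hu : ‖u‖₂ ≤ m) :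
    ‖covGrad β (Apot R u) u‖₂ ≤ (1 + 2 * |β| * m ^ 2) * ‖cgrad u‖₂ := by
  have hA0 : IsBddCont fun _ : E2 => (0 : E2) := by fun_prop
  have hcov : ‖covGrad β (fun _ => (0 : E2)) u‖₂ ≤ ‖cgrad u‖₂ := by
    simpa using lpNorm_covGrad_le (β := β) (a := 0) (A := fun _ => 0) (by simp) u
  have hApot (x : E2) : ‖Apot R u x‖ ≤ 2 * (‖u‖₂ * ‖cgrad u‖₂) := by
    refine (norm_Apot_le_lpNorm_mul_lpNorm_covGrad R β hA0 u x).trans ?_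
    gcongr
    exact lpNorm_nonneg
  have h := lpNorm_covGrad_le (β := β) hApot u
  have hsq : ‖u‖₂ ^ 2 ≤ m ^ 2 := pow_le_pow_left₀ lpNorm_nonneg hu 2
  nlinarith [mul_le_mul_of_nonneg_left hsq (mul_nonneg (abs_nonneg β)
    (lpNorm_nonneg (f := cgrad u) (p := 2) (μ := volume)))]

end Diamagnetic

section GlobalConservation

variable {β R m : ℝ} {u v : 𝓢(E2, ℂ)}

theorem lpNorm_cgrad_le_of_energy_eq (hR : 0 < R) (hmass : ‖u‖₂ = ‖v‖₂)
    (henergy : energy β R u = energy β R v) (hm : ‖v‖₂ ≤ m) :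
    ‖cgrad u‖₂ ≤ (1 + 2 * |β| * m ^ 2) ^ 2 * ‖cgrad v‖₂ := by
  rw [energy_eq_sq_lpNorm hR, energy_eq_sq_lpNorm hR,
    sq_eq_sq₀ lpNorm_nonneg lpNorm_nonneg] at henergy
  rw [sq, mul_assoc]
  refine (lpNorm_cgrad_le_mul_lpNorm_covGrad_Apot (β := β) hR (hmass.trans_le hm)).trans ?_
  rw [henergy]
  gcongr
  exact lpNorm_covGrad_Apot_le_mul_lpNorm_cgrad hm

theorem IsCSSFlow.lpNorm_eq_and_energy_eq {u : ℝ → 𝓢(E2, ℂ)} {du : ℝ → E2 → ℂ}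
    (hu : IsCSSFlow β R u du) (hR : 0 < R) (s t : ℝ) :
    ‖u s‖₂ = ‖u t‖₂ ∧ energy β R (u s) = energy β R (u t) := by
  have hlsc : LowerSemicontinuous fun t => ‖u t‖₂ + ‖cgrad (u t)‖₂ :=
    (lowerSemicontinuous_lpNorm (fun t => (isTame_schwartz (u t)).memLp_two) hu.continuous).add
      (lowerSemicontinuous_lpNorm (fun t => (isTame_cgrad (u t)).memLp_two) hu.continuous_cgrad)
  have h := eq_of_forall_eq_of_bddAbove (E := fun t => (‖u t‖₂, energy β R (u t))) hlsc
    (fun a b ⟨M, hM⟩ => ?_)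
    (fun n => ⟨n + (1 + 2 * |β| * n ^ 2) ^ 2 * n, fun s t hE hn => ?_⟩) s t
  · exact Prod.ext_iff.1 h
  · have hbound : ∀ t ∈ uIcc a b, HasH1Bound M (u t) := fun t ht => by
      have h := hM (mem_image_of_mem _ ht)
      exact ⟨(le_add_of_nonneg_right lpNorm_nonneg).trans h,
        (le_add_of_nonneg_left lpNorm_nonneg).trans h⟩
    refine Prod.ext ?_ (hu.energy_eq hR hbound)
    rcases le_total a b with hab | hab
    · exact (hu.lpNorm_eq hR hab (by rwa [uIcc_of_le hab] at hbound)).symm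
    · exact hu.lpNorm_eq hR hab (by rwa [uIcc_of_ge hab] at hbound)
  · obtain ⟨hmass, henergy⟩ := Prod.ext_iff.1 hE
    have hmn := (le_add_of_nonneg_right lpNorm_nonneg).trans hn
    have hgn := (le_add_of_nonneg_left lpNorm_nonneg).trans hn
    refine add_le_add (hmass.symm.trans_le hmn)
      ((lpNorm_cgrad_le_of_energy_eq hR hmass.symm henergy.symm hmn).trans ?_)
    gcongr

end GlobalConservation

section SobolevNorm

variable {M : ℝ}

theorem H1_le_ofReal_iff (u : 𝓢(E2, ℂ)) (hM : 0 ≤ M) :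
    H1 u ≤ ENNReal.ofReal M ↔ ‖u‖₂ ^ 2 + ‖fderiv ℝ u‖₂ ^ 2 ≤ M ^ 2 := by
  rw [H1, ← ofReal_lpNorm (isTame_schwartz u).memLp_two,
    ← ofReal_lpNorm (f := fun x => fderiv ℝ u x) (isTame_fderiv u).memLp_two,
    ← ofReal_pow lpNorm_nonneg, ← ofReal_pow lpNorm_nonneg,
    ← ofReal_add (sq_nonneg _) (sq_nonneg _), ofReal_rpow_of_nonneg (by positivity) (by positivity),
    ← Real.sqrt_eq_rpow, ofReal_le_ofReal_iff hM, Real.sqrt_le_left hM]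

theorem lpNorm_fderiv_le_lpNorm_cgrad (u : 𝓢(E2, ℂ)) : ‖fderiv ℝ u‖₂ ≤ ‖cgrad u‖₂ := by
  simpa using lpNorm_two_le_mul zero_le_one (isTame_cgrad u).memLp_two fun x => by
    rw [one_mul]
    exact ContinuousLinearMap.opNorm_le_bound _ (norm_nonneg _) (norm_fderiv_apply_le u x)

theorem lpNorm_cgrad_le_two_mul_lpNorm_fderiv (u : 𝓢(E2, ℂ)) :
    ‖cgrad u‖₂ ≤ 2 * ‖fderiv ℝ u‖₂ := by
  refine lpNorm_two_le_mul zero_le_two (isTame_fderiv u).memLp_two fun x => ?_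
  have hle (j : Fin 2) : ‖fderiv ℝ u x (e2 j)‖ ≤ ‖fderiv ℝ u x‖ := by
    simpa [e2] using (fderiv ℝ u x).le_opNorm (e2 j)
  refine abs_le_of_sq_le_sq' ?_ (by positivity) |>.2
  rw [EuclideanSpace.norm_sq_eq, Fin.sum_univ_two]
  simp only [cgrad]
  linarith [pow_le_pow_left₀ (norm_nonneg _) (hle 0) 2,
    pow_le_pow_left₀ (norm_nonneg _) (hle 1) 2, sq_nonneg ‖fderiv ℝ u x‖]

theorem hasH1Bound_of_H1_le {u : 𝓢(E2, ℂ)} (hM : 0 ≤ M) (h : H1 u ≤ ENNReal.ofReal M) :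
    HasH1Bound (2 * M) u := by
  rw [H1_le_ofReal_iff u hM] at h
  have hu : ‖u‖₂ ≤ M := abs_le_of_sq_le_sq' (by linarith [sq_nonneg ‖fderiv ℝ u‖₂]) hM |>.2
  have hDu : ‖fderiv ℝ u‖₂ ≤ M := abs_le_of_sq_le_sq' (by linarith [sq_nonneg ‖u‖₂]) hM |>.2
  exact ⟨by linarith, (lpNorm_cgrad_le_two_mul_lpNorm_fderiv u).trans (by linarith)⟩

theorem HasH1Bound.H1_le {u : 𝓢(E2, ℂ)} (h : HasH1Bound M u) :
    H1 u ≤ ENNReal.ofReal (2 * M) := by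
  have hM := h.nonneg
  rw [H1_le_ofReal_iff u (by positivity)]
  have hu := pow_le_pow_left₀ lpNorm_nonneg h.1 2
  have hDu := pow_le_pow_left₀ lpNorm_nonneg ((lpNorm_fderiv_le_lpNorm_cgrad u).trans h.2) 2
  linarith [sq_nonneg M]

end SobolevNorm

theorem statement14_general (β M : ℝ) :
    ∃ C : ℝ, ∀ R : ℝ, 0 < R →
      ∀ (u : ℝ → SchwartzMap E2 ℂ) (du : ℝ → E2 → ℂ),
        (ContDiff ℝ 1 fun p : ℝ × E2 => u p.1 p.2) →
        (∀ t x, HasDerivAt (fun s => u s x) (du t x) t) →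
        (∀ t x, Complex.I * du t x = cssRHS β R (⇑(u t)) x) →
        H1 (⇑(u 0)) ≤ ENNReal.ofReal M →
        ∀ t : ℝ, H1 (⇑(u t)) ≤ ENNReal.ofReal C := by
  set m := 2 * max M 0
  have hm : 0 ≤ m := by positivity
  refine ⟨2 * ((1 + 2 * |β| * m ^ 2) ^ 2 * m), fun R hR u du hC1 hdu heq hinit t => ?_⟩
  have hu : IsCSSFlow β R u du := ⟨⟨hC1, hdu⟩, fun t x => by rw [heq, cssRHS_eq_ham]⟩
  have h0 : HasH1Bound m (u 0) := hasH1Bound_of_H1_le (le_max_right M 0)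
    (hinit.trans (ofReal_le_ofReal (le_max_left M 0)))
  obtain ⟨hmass, henergy⟩ := hu.lpNorm_eq_and_energy_eq hR t 0
  have hgrad := lpNorm_cgrad_le_of_energy_eq hR hmass henergy h0.1
  have hm_le : m ≤ (1 + 2 * |β| * m ^ 2) ^ 2 * m :=
    le_mul_of_one_le_left hm (one_le_pow₀ (le_add_of_nonneg_right (by positivity)))
  refine HasH1Bound.H1_le ⟨(hmass.trans_le h0.1).trans hm_le, hgrad.trans ?_⟩
  gcongr
  exact h0.2

end

/-- Theorem 3.1, estimate (3.4) (uniform `H¹` bound): for a smooth Schwartz-class,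
mass-conserving solution of the regularized CSS equation there is a constant `C`
depending only on `β` and `‖u(0)‖_{H¹}` (independent of `R` and `t`) with
`‖u(t)‖_{H¹} ≤ C` for all `t`. -/
theorem statement14 (β M : ℝ) :
    ∃ C : ℝ, ∀ R : ℝ, 0 < R →
      ∀ (u : ℝ → SchwartzMap E2 ℂ) (du : ℝ → E2 → ℂ),
        (ContDiff ℝ (⊤ : ℕ∞) fun p : ℝ × E2 => u p.1 p.2) →
        (∀ t x, HasDerivAt (fun s => u s x) (du t x) t) →
        (∀ t x, Complex.I * du t x = cssRHS β R (⇑(u t)) x) →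
        (∀ t : ℝ, eLpNorm (⇑(u t)) 2 volume = eLpNorm (⇑(u 0)) 2 volume) →
        H1 (⇑(u 0)) ≤ ENNReal.ofReal M →
        ∀ t : ℝ, H1 (⇑(u t)) ≤ ENNReal.ofReal C :=
  (statement14_general β M).imp fun _ hC R hR u du hu hdu heq _ =>
    hC R hR u du (hu.of_le (by exact_mod_cast le_top)) hdu heq
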